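/- arXiv:1804.09847 — 3 statements merged into one kernel-verified Lean document; each statement's English description precedes it below -/
import Mathlib

section
/- For large M, the function field Mertens estimate holds: -Σ_{deg P ≤ M} ln(1 - 1/|P|) = ln M + γ + 1/(2M) + O(1/M²), where the sum is over monic irreducible polynomials P of F_q[T] of degree at most M, |P| = q^{deg P}, and γ is the Euler–Mascheroni constant. -/
open Polynomial

section MertensAux

open UniqueFactorizationMonoid Finset

/-- Fundamental identity: the monic irreducible polynomials whose degree divides `n`
form a finite set with degrees summing to `q ^ n`. -/
lemma mertens_aux_exists_finset (Fq : Type) [Field Fq] [Fintype Fq] (n : ℕ) (hn : n ≠ 0) :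
    ∃ T : Finset (Polynomial Fq),
      (∀ P, P ∈ T ↔ (P.Monic ∧ Irreducible P ∧ P.natDegree ∣ n)) ∧
      ∑ P ∈ T, P.natDegree = (Fintype.card Fq) ^ n := by
  classical
  set f : Polynomial Fq := X ^ (Nat.card Fq) ^ n - X with hf
  have hcard : 1 < Nat.card Fq := Finite.one_lt_card
  have hf0 : f ≠ 0 := FiniteField.X_pow_card_pow_sub_X_ne_zero _ hn hcard
  have hdeg : f.natDegree = (Nat.card Fq) ^ n :=
    FiniteField.X_pow_card_pow_sub_X_natDegree_eq _ hn hcard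
  have hsep : f.Separable := by
    obtain ⟨p, hp⟩ := CharP.exists Fq
    apply galois_poly_separable p
    have : p ∣ Nat.card Fq := by
      rw [← CharP.cast_eq_zero_iff Fq p, Nat.card_eq_fintype_card]
      exact FiniteField.cast_card_eq_zero Fq
    exact this.trans (dvd_pow_self _ hn)
  have hnodup : (normalizedFactors f).Nodup :=
    (squarefree_iff_nodup_normalizedFactors hf0).1 hsep.squarefree
  refine ⟨(normalizedFactors f).toFinset, ?_, ?_⟩
  · intro P
    rw [Multiset.mem_toFinset]
    constructor
    · intro h
      have hi := irreducible_of_normalized_factor P h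
      refine ⟨?_, hi, ?_⟩
      · have h1 := normalize_normalized_factor P h
        rw [← h1]
        exact monic_normalize hi.ne_zero
      · exact hi.natDegree_dvd_iff_dvd_X_pow_card_pow_sub_X.2 (dvd_of_mem_normalizedFactors h)
    · rintro ⟨hm, hi, hd⟩
      have h2 := hi.natDegree_dvd_iff_dvd_X_pow_card_pow_sub_X.1 hd
      obtain ⟨Q, hQ, hPQ⟩ := exists_mem_normalizedFactors_of_dvd hf0 hi h2
      have hiQ := irreducible_of_normalized_factor Q hQ
      have hmQ : Q.Monic := by
        rw [← normalize_normalized_factor Q hQ]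
        exact monic_normalize hiQ.ne_zero
      rwa [eq_of_monic_of_associated hm hmQ hPQ]
  · have hprod : ((normalizedFactors f).map natDegree).sum = f.natDegree := by
      rw [← natDegree_multiset_prod _ (zero_notMem_normalizedFactors f)]
      exact natDegree_eq_of_degree_eq
        (degree_eq_degree_of_associated (prod_normalizedFactors hf0))
    rw [Finset.sum, Multiset.toFinset_val, hnodup.dedup, hprod, hdeg, Nat.card_eq_fintype_card]

lemma mertens_aux_harmonic (n : ℕ) (hn : 1 ≤ n) :
    |(harmonic n : ℝ) - (Real.log n + Real.eulerMascheroniConstant + 1 / (2 * n))| ≤ 1 / n ^ 2 := by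
  set f : ℕ → ℝ := fun m => (harmonic (m + 1) : ℝ) - Real.log ((m + 1 : ℕ) : ℝ)
    - 1 / (2 * ((m + 1 : ℕ) : ℝ)) with hf
  have hinv : Filter.Tendsto (fun m : ℕ => 1 / ((m + 1 : ℕ) : ℝ)) Filter.atTop (nhds 0) := by
    simpa using tendsto_one_div_add_atTop_nhds_zero_nat (𝕜 := ℝ)
  have hft : Filter.Tendsto f Filter.atTop (nhds Real.eulerMascheroniConstant) := by
    have h1 := Real.tendsto_harmonic_sub_log.comp (Filter.tendsto_add_atTop_nat 1)
    have h2 := h1.sub (hinv.const_mul (1 / 2))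
    rw [mul_zero, sub_zero] at h2
    refine h2.congr fun m => ?_
    simp only [hf, Function.comp]
    rw [div_mul_div_comm, one_mul]
  set g : ℕ → ℝ := fun m => f m + 1 / ((m + 1 : ℕ) : ℝ) ^ 2 with hg
  have hgt : Filter.Tendsto g Filter.atTop (nhds Real.eulerMascheroniConstant) := by
    have h2 := hft.add (hinv.mul hinv)
    rw [mul_zero, add_zero] at h2
    refine h2.congr fun m => ?_
    simp only [hg]
    rw [div_mul_div_comm, one_mul, sq]
  have hstep : ∀ m, f (m + 1) - f m = (1 / ((m : ℝ) + 1) + 1 / ((m : ℝ) + 2)) / 2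
      - Real.log (1 + 1 / ((m : ℝ) + 1)) := by
    intro m
    have hm : (0 : ℝ) < (m : ℝ) + 1 := by positivity
    have hlog : Real.log (1 + 1 / ((m : ℝ) + 1)) = Real.log ((m : ℝ) + 2) - Real.log ((m : ℝ) + 1) := by
      rw [← Real.log_div (by positivity) (by positivity)]
      congr 1
      field_simp
      ring
    simp only [hf]
    rw [harmonic_succ (m + 1), hlog]
    push_cast
    have e : (m : ℝ) + 1 + 1 = m + 2 := by ring
    rw [e]
    field_simp
    ring
  have hmono : Monotone f := by
    refine monotone_nat_of_le_succ fun m => ?_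
    have hm : (0 : ℝ) < (m : ℝ) + 1 := by positivity
    have h := Real.self_le_sinh_iff.2
      (Real.log_nonneg (x := 1 + 1 / ((m : ℝ) + 1)) (by simp; positivity))
    rw [Real.sinh_log (by positivity)] at h
    have e : (1 + 1 / ((m : ℝ) + 1) - (1 + 1 / ((m : ℝ) + 1))⁻¹) / 2 =
        (1 / ((m : ℝ) + 1) + 1 / ((m : ℝ) + 2)) / 2 := by
      have : (1 + 1 / ((m : ℝ) + 1)) = (m + 2) / (m + 1) := by field_simp; ring
      rw [this]
      field_simp
      ring
    rw [e] at h
    linarith [hstep m]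
  have hanti : Antitone g := by
    refine antitone_nat_of_succ_le fun m => ?_
    have hm : (0 : ℝ) < (m : ℝ) + 1 := by positivity
    have h := Real.le_log_one_add_of_nonneg (x := 1 / ((m : ℝ) + 1)) (by positivity)
    have hs := hstep m
    simp only [hg]
    push_cast
    have e : (m : ℝ) + 1 + 1 = m + 2 := by ring
    rw [e]
    have key : (1 / ((m : ℝ) + 1) + 1 / ((m : ℝ) + 2)) / 2
        - 2 * (1 / ((m : ℝ) + 1)) / (1 / ((m : ℝ) + 1) + 2)
        ≤ 1 / ((m : ℝ) + 1) ^ 2 - 1 / ((m : ℝ) + 2) ^ 2 := by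
      have hx : (0 : ℝ) ≤ (m : ℝ) := Nat.cast_nonneg m
      generalize (m : ℝ) = x at hx
      have e1 : (1 / (x + 1) + 1 / (x + 2)) / 2
        - 2 * (1 / (x + 1)) / (1 / (x + 1) + 2) = 1 / (2 * (x + 1) * (x + 2) * (2 * x + 3)) := by
        have : 1 / (x + 1) + 2 = (2 * x + 3) / (x + 1) := by field_simp; ring
        rw [this]
        field_simp
        ring
      have e2 : 1 / (x + 1) ^ 2 - 1 / (x + 2) ^ 2 = (2 * x + 3) / ((x + 1) ^ 2 * (x + 2) ^ 2) := by
        field_simp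
        ring
      rw [e1, e2, div_le_div_iff₀ (by positivity) (by positivity)]
      have h1 : 0 ≤ (x + 1) * (x + 2) := by positivity
      have h2 : (x + 1) * (x + 2) ≤ (2 * x + 3) * 2 * (2 * x + 3) := by nlinarith
      nlinarith [mul_le_mul_of_nonneg_left h2 h1]
    linarith
  obtain ⟨m, rfl⟩ : ∃ m, n = m + 1 := ⟨n - 1, by omega⟩
  have h1 := hmono.ge_of_tendsto hft m
  have h2 := hanti.le_of_tendsto hgt m
  simp only [hg] at h2
  simp only [hf] at h1 h2
  rw [abs_le]
  constructor
  · linarith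
  · have : (0 : ℝ) ≤ 1 / ((m + 1 : ℕ) : ℝ) ^ 2 := by positivity
    linarith

lemma mertens_aux_cube (a : ℕ) : a ^ 3 ≤ 16 * 2 ^ a := by
  induction a with
  | zero => norm_num
  | succ a ih =>
    by_cases h : a < 4
    · interval_cases a <;> norm_num
    · push Not at h
      have : (a + 1) ^ 3 ≤ 2 * a ^ 3 := by
        obtain ⟨b, rfl⟩ := Nat.exists_eq_add_of_le h
        ring_nf
        nlinarith [sq_nonneg b, Nat.zero_le (b ^ 3)]
      calc (a + 1) ^ 3 ≤ 2 * a ^ 3 := this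
        _ ≤ 16 * 2 ^ (a + 1) := by have := pow_succ 2 a; omega

/-- Reindexing of the truncated logarithm series. -/
lemma mertens_aux_reindex (d M : ℕ) (hd : 0 < d) (y : ℝ) :
    ∑ k ∈ range (M / d), (y ^ d) ^ (k + 1) / ((k : ℝ) + 1) =
      ∑ n ∈ (Icc 1 M).filter (fun n => d ∣ n), (d : ℝ) * (y ^ n / n) := by
  refine Finset.sum_bij (fun k _ => d * (k + 1)) ?_ ?_ ?_ ?_
  · intro k hk
    rw [mem_range, Nat.lt_iff_add_one_le, Nat.le_div_iff_mul_le hd] at hk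
    simp only [mem_filter, mem_Icc]
    refine ⟨⟨Nat.mul_pos hd (Nat.succ_pos k), by rwa [mul_comm]⟩, dvd_mul_right _ _⟩
  · intro a _ b _ h
    have := Nat.eq_of_mul_eq_mul_left hd h
    omega
  · intro n hn
    simp only [mem_filter, mem_Icc] at hn
    obtain ⟨⟨h1, h2⟩, c, rfl⟩ := hn
    have hc : 0 < c := Nat.pos_of_mul_pos_left h1
    refine ⟨c - 1, ?_, ?_⟩
    · rw [mem_range, Nat.lt_iff_add_one_le, Nat.le_div_iff_mul_le hd, Nat.sub_add_cancel hc, mul_comm]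
      exact h2
    · simp only [Nat.sub_add_cancel hc]
  · intro k _
    have : (d : ℝ) ≠ 0 := by positivity
    have : (k : ℝ) + 1 ≠ 0 := by positivity
    push_cast
    rw [← pow_mul]
    field_simp

/-- Tail bound for a single degree. -/
lemma mertens_aux_tail (q d M : ℕ) (hq : 2 ≤ q) (hd : 0 < d) (hdM : d ≤ M) :
    (q : ℝ) ^ d * (((1 / (q : ℝ) ^ d) ^ (M / d + 1)) * 2) ≤ 256 / (M : ℝ) ^ 3 := by
  have hM : 0 < M := by omega
  have hk : 1 ≤ M / d := (Nat.one_le_div_iff hd).2 hdM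
  set a := d * (M / d) with ha
  have h1 : M ≤ 2 * a := by
    have := Nat.lt_mul_div_succ M hd
    have : d ≤ d * (M / d) := Nat.le_mul_of_pos_right d hk
    rw [mul_add] at *
    omega
  have hq0 : (0 : ℝ) < q := by positivity
  have e : (q : ℝ) ^ d * (((1 / (q : ℝ) ^ d) ^ (M / d + 1)) * 2) = 2 / (q : ℝ) ^ a := by
    rw [ha, pow_mul, pow_succ, div_pow, one_pow]
    field_simp
  rw [e, div_le_div_iff₀ (by positivity) (by positivity)]
  have h2 : M ^ 3 ≤ 8 * a ^ 3 := by
    calc M ^ 3 ≤ (2 * a) ^ 3 := Nat.pow_le_pow_left h1 3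
      _ = 8 * a ^ 3 := by ring
  have h3 := mertens_aux_cube a
  have h4 : 2 ^ a ≤ q ^ a := Nat.pow_le_pow_left hq a
  have h5 : 2 * M ^ 3 ≤ 256 * q ^ a := by omega
  exact_mod_cast h5

end MertensAux

/-- Mertens' estimate for function fields:
`-∑_{deg P ≤ M} ln(1 - 1/|P|) = ln M + γ + 1/(2M) + O(1/M²)`. -/
theorem mertens_function_field (Fq : Type) [Field Fq] [Fintype Fq]
    (q : ℕ) (hq : Fintype.card Fq = q) :
    ∃ C : ℝ, 0 < C ∧ ∃ M0 : ℕ, ∀ M : ℕ, M0 ≤ M →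
      |(-∑ᶠ P ∈ {P : Polynomial Fq | P.Monic ∧ Irreducible P ∧ P.natDegree ≤ M},
            Real.log (1 - 1 / (q : ℝ) ^ P.natDegree))
          - (Real.log M + Real.eulerMascheroniConstant + 1 / (2 * M))|
        ≤ C / M ^ 2 := by
  classical
  refine ⟨257, by norm_num, 1, fun M hM => ?_⟩
  have hq2 : 2 ≤ q := by rw [← hq]; exact Fintype.one_lt_card
  have hq0 : (0 : ℝ) < q := by positivity
  have hM0 : (0 : ℝ) < M := by exact_mod_cast hM
  -- the finite set of primes
  have hfin : {P : Polynomial Fq | P.Monic ∧ Irreducible P ∧ P.natDegree ≤ M}.Finite := by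
    obtain ⟨T, hT, -⟩ := mertens_aux_exists_finset Fq M.factorial (Nat.factorial_ne_zero M)
    refine T.finite_toSet.subset ?_
    rintro P ⟨h1, h2, h3⟩
    exact (hT P).2 ⟨h1, h2, Nat.dvd_factorial h2.natDegree_pos h3⟩
  set S := hfin.toFinset with hS
  have hmem : ∀ P, P ∈ S ↔ (P.Monic ∧ Irreducible P ∧ P.natDegree ≤ M) := by
    intro P; rw [hS, Set.Finite.mem_toFinset]; rfl
  rw [finsum_mem_eq_finite_toFinset_sum _ hfin, ← hS]
  -- identity for n
  have hid : ∀ n, 1 ≤ n → n ≤ M →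
      ∑ P ∈ S.filter (fun P => P.natDegree ∣ n), P.natDegree = q ^ n := by
    intro n h1 h2
    obtain ⟨T, hT, hTs⟩ := mertens_aux_exists_finset Fq n (by omega)
    rw [← hq, ← hTs]
    congr 1
    ext P
    rw [Finset.mem_filter, hmem, hT]
    constructor
    · rintro ⟨⟨a, b, -⟩, c⟩; exact ⟨a, b, c⟩
    · rintro ⟨a, b, c⟩; exact ⟨⟨a, b, (Nat.le_of_dvd h1 c).trans h2⟩, c⟩
  -- main term
  have hmain : ∑ P ∈ S, ∑ k ∈ Finset.range (M / P.natDegree),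
      (1 / (q : ℝ) ^ P.natDegree) ^ (k + 1) / ((k : ℝ) + 1) = (harmonic M : ℝ) := by
    have h1 : ∀ P ∈ S, ∑ k ∈ Finset.range (M / P.natDegree),
        (1 / (q : ℝ) ^ P.natDegree) ^ (k + 1) / ((k : ℝ) + 1) =
        ∑ n ∈ Finset.Icc 1 M, if P.natDegree ∣ n then
          (P.natDegree : ℝ) * ((1 / (q : ℝ)) ^ n / n) else 0 := by
      intro P hP
      rw [← Finset.sum_filter,
        ← mertens_aux_reindex _ _ ((hmem P).1 hP).2.1.natDegree_pos, div_pow, one_pow]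
    rw [Finset.sum_congr rfl h1, Finset.sum_comm, harmonic_eq_sum_Icc]
    push_cast
    refine Finset.sum_congr rfl fun n hn => ?_
    rw [Finset.mem_Icc] at hn
    rw [← Finset.sum_filter, ← Finset.sum_mul, ← Nat.cast_sum, hid n hn.1 hn.2]
    push_cast
    rw [div_pow, one_pow]
    have : (n : ℝ) ≠ 0 := by have := hn.1; positivity
    field_simp
  -- error term
  have herr : |∑ P ∈ S, (∑ k ∈ Finset.range (M / P.natDegree),
      (1 / (q : ℝ) ^ P.natDegree) ^ (k + 1) / ((k : ℝ) + 1)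
        + Real.log (1 - 1 / (q : ℝ) ^ P.natDegree))| ≤ 256 / (M : ℝ) ^ 2 := by
    have hterm : ∀ P ∈ S, |∑ k ∈ Finset.range (M / P.natDegree),
        (1 / (q : ℝ) ^ P.natDegree) ^ (k + 1) / ((k : ℝ) + 1)
        + Real.log (1 - 1 / (q : ℝ) ^ P.natDegree)| ≤
        (1 / (q : ℝ) ^ P.natDegree) ^ (M / P.natDegree + 1) * 2 := by
      intro P hP
      have hd := ((hmem P).1 hP).2.1.natDegree_pos
      set x : ℝ := 1 / (q : ℝ) ^ P.natDegree with hx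
      have hx0 : 0 < x := by positivity
      have hx1 : x ≤ 1 / 2 := by
        have h1 : 2 ≤ q ^ P.natDegree := hq2.trans (Nat.le_self_pow hd.ne' q)
        have h2 : (2 : ℝ) ≤ (q : ℝ) ^ P.natDegree := by exact_mod_cast h1
        exact one_div_le_one_div_of_le (by norm_num) h2
      have habs : |x| = x := abs_of_pos hx0
      refine (Real.abs_log_sub_add_sum_range_le (by rw [habs]; linarith) _).trans ?_
      rw [habs, div_le_iff₀ (by linarith)]
      have : 0 < x ^ (M / P.natDegree + 1) := by positivity
      nlinarith
    refine (Finset.abs_sum_le_sum_abs _ _).trans ((Finset.sum_le_sum hterm).trans ?_)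
    have hmaps : ∀ P ∈ S, P.natDegree ∈ Finset.Icc 1 M := fun P hP =>
      Finset.mem_Icc.2 ⟨((hmem P).1 hP).2.1.natDegree_pos, ((hmem P).1 hP).2.2⟩
    rw [← Finset.sum_fiberwise_of_maps_to hmaps]
    have hfib : ∀ d ∈ Finset.Icc 1 M, ∑ P ∈ S.filter (fun P => P.natDegree = d),
        (1 / (q : ℝ) ^ P.natDegree) ^ (M / P.natDegree + 1) * 2 ≤ 256 / (M : ℝ) ^ 3 := by
      intro d hd
      rw [Finset.mem_Icc] at hd
      have hc : (S.filter (fun P => P.natDegree = d)).card ≤ q ^ d := by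
        rw [← hid d hd.1 hd.2, Finset.card_eq_sum_ones]
        refine (Finset.sum_le_sum (g := fun P => P.natDegree) fun P hP => ?_).trans
          (Finset.sum_le_sum_of_subset ?_)
        · rw [Finset.mem_filter] at hP
          rw [hP.2]; exact hd.1
        · intro P hP
          rw [Finset.mem_filter] at hP ⊢
          exact ⟨hP.1, hP.2 ▸ dvd_rfl⟩
      have hcR : ((S.filter (fun P => P.natDegree = d)).card : ℝ) ≤ (q : ℝ) ^ d := by
        exact_mod_cast hc
      refine le_trans ?_ (mertens_aux_tail q d M hq2 hd.1 hd.2)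
      rw [Finset.sum_congr rfl (g := fun _ => (1 / (q : ℝ) ^ d) ^ (M / d + 1) * 2)
        (fun P hP => by rw [(Finset.mem_filter.1 hP).2]), Finset.sum_const, nsmul_eq_mul]
      exact mul_le_mul_of_nonneg_right hcR (by positivity)
    refine (Finset.sum_le_sum hfib).trans (le_of_eq ?_)
    rw [Finset.sum_const, Nat.card_Icc, nsmul_eq_mul, Nat.add_sub_cancel]
    field_simp
  rw [Finset.sum_add_distrib, hmain] at herr
  have hh := mertens_aux_harmonic M hM
  rw [abs_le] at herr hh ⊢
  have e : (257 : ℝ) / (M : ℝ) ^ 2 = 256 / (M : ℝ) ^ 2 + 1 / (M : ℝ) ^ 2 := by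
    rw [← add_div]; norm_num
  rw [e]
  constructor <;> linarith [herr.1, herr.2, hh.1, hh.2]
end

section
/- Smoothed Perron formula: let λ > 0, N a positive integer, and c > 0. For y > 0, with φ(y) = 1 if y > 1 and 0 otherwise, one has 0 ≤ (1/2πi)∫_{c-i∞}^{c+i∞} y^s ((e^{λs}−1)/(λs))^N ds/s − φ(y) ≤ (1/2πi)∫_{c-i∞}^{c+i∞} y^s ((e^{λs}−1)/(λs))^N (1−e^{-λNs})/s ds. -/
open Complex MeasureTheory

lemma s_ne (c : ℝ) (hc : 0 < c) (u : ℝ) : (c:ℂ) + u * I ≠ 0 := by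
  intro h
  have := congrArg Complex.re h
  simp at this
  linarith

lemma s_cont (c : ℝ) : Continuous (fun u : ℝ => (c:ℂ) + u * I) := by fun_prop

lemma int_base (c : ℝ) (hc : 0 < c) : Integrable (fun u : ℝ => 1 / ((c:ℂ) + u * I)^2) := by
  have h1 : Integrable (fun u : ℝ => (c^2)⁻¹ * (1 + (c⁻¹ * u)^2)⁻¹) :=
    ((integrable_inv_one_add_sq).comp_mul_left' (inv_ne_zero hc.ne')).const_mul _
  refine h1.mono' ?_ ?_
  · refine Continuous.aestronglyMeasurable ?_
    exact Continuous.div continuous_const ((s_cont c).pow 2) (fun u => pow_ne_zero _ (s_ne c hc u))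
  · refine Filter.Eventually.of_forall fun u => ?_
    have : ‖(c:ℂ) + u * I‖^2 = c^2 + u^2 := by
      rw [← Complex.normSq_eq_norm_sq, Complex.normSq_add_mul_I]
    rw [norm_div, norm_pow, this, norm_one, ← mul_inv, one_div]
    apply le_of_eq
    congr 1
    field_simp

lemma laplace_lin (r : ℂ) (hr : 0 < r.re) :
    ∫ t : ℝ in Set.Ioi 0, (t:ℂ) * Complex.exp (-(r * t)) = 1 / r ^ 2 := by
  have hr0 : r ≠ 0 := by
    intro h
    simp [h] at hr
  have hint : IntegrableOn (fun t : ℝ => (t:ℂ) * Complex.exp (-(r * t))) (Set.Ioi 0) := by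
    have h1 := integrableOn_rpow_mul_exp_neg_mul_rpow (s := 1) (p := 1)
      (by norm_num) (by norm_num) hr
    refine Integrable.mono' h1 (Continuous.aestronglyMeasurable (by fun_prop)) ?_
    filter_upwards [ae_restrict_mem measurableSet_Ioi] with t ht
    have ht' : 0 < t := ht
    rw [norm_mul, Complex.norm_exp, Complex.norm_real, Real.norm_of_nonneg ht'.le]
    simp
  have hA : ∀ (a : ℝ), Filter.Tendsto (fun t : ℝ => ‖((t ^ a : ℝ) : ℂ) * Complex.exp (-(r * t))‖)
      Filter.atTop (nhds 0) := by
    intro a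
    refine (tendsto_rpow_mul_exp_neg_mul_atTop_nhds_zero a r.re hr).congr' ?_
    filter_upwards [Filter.eventually_gt_atTop 0] with t ht
    rw [norm_mul, Complex.norm_exp, Complex.norm_real, Real.norm_of_nonneg (by positivity)]
    simp
  have hA1 := (tendsto_zero_iff_norm_tendsto_zero.mpr (hA 1)).const_mul (-(1 / r))
  have hA0 := (tendsto_zero_iff_norm_tendsto_zero.mpr (hA 0)).const_mul (-(1 / r ^ 2))
  have hT := hA1.add hA0
  simp only [Real.rpow_one, Real.rpow_zero, mul_zero, add_zero, Complex.ofReal_one, one_mul] at hT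
  have h := integral_Ioi_of_hasDerivAt_of_tendsto' (a := 0)
    (f := fun t : ℝ => -(1 / r) * ((t:ℂ) * Complex.exp (-(r * t))) +
      -(1 / r ^ 2) * Complex.exp (-(r * t)))
    (f' := fun t : ℝ => (t:ℂ) * Complex.exp (-(r * t))) ?_ hint hT
  · rw [h]; simp
  · intro t _
    have he : HasDerivAt (fun t : ℝ => Complex.exp (-(r * t)))
        (Complex.exp (-(r * t)) * (-(r * 1))) t :=
      (((Complex.ofRealCLM.hasDerivAt (x := t)).const_mul r).neg).cexp
    have ht : HasDerivAt (fun t : ℝ => (t:ℂ)) 1 t := Complex.ofRealCLM.hasDerivAt (x := t)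
    refine (((ht.mul he).const_mul (-(1 / r))).add (he.const_mul (-(1 / r ^ 2)))).congr_deriv ?_
    field_simp
    ring

/-- The basic Laplace inversion. -/
lemma base_inv (c : ℝ) (hc : 0 < c) (x : ℝ) :
    ∫ u : ℝ, Complex.exp (x * ((c:ℂ) + u * I)) * (1 / ((c:ℂ) + u * I)^2)
      = 2 * Real.pi * ((max x 0 : ℝ) : ℂ) := by
  set f : ℝ → ℂ := fun v => ((max v 0 * Real.exp (-c * v) : ℝ) : ℂ) with hf
  have hfc : Continuous f := by fun_prop
  have hind : ∀ g : ℝ → ℂ, (fun v => g v * f v) =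
      (Set.Ioi (0:ℝ)).indicator (fun v => g v * (v * Complex.exp (-c * v))) := by
    intro g
    ext v
    by_cases hv : 0 < v
    · rw [Set.indicator_of_mem (by exact hv)]
      simp [hf, max_eq_left hv.le]
    · rw [Set.indicator_of_notMem (by exact hv)]
      simp [hf, max_eq_right (not_lt.mp hv)]
  have hfi : Integrable f := by
    have h0 := hind (fun _ => 1)
    simp only [one_mul] at h0
    have h0' : f = (Set.Ioi (0:ℝ)).indicator (fun v => (v * Complex.exp (-c * v))) := h0
    rw [h0', integrable_indicator_iff measurableSet_Ioi]
    have h1 := integrableOn_rpow_mul_exp_neg_mul_rpow (s := 1) (p := 1) (by norm_num) (by norm_num) hc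
    have h2 : IntegrableOn (fun v : ℝ => ((v ^ (1:ℝ) * Real.exp (-c * v ^ (1:ℝ)) : ℝ) : ℂ))
      (Set.Ioi 0) := h1.ofReal
    simpa using h2
  have hF : FourierTransform.fourier f =
      fun w : ℝ => 1 / ((c:ℂ) + ((2 * Real.pi * w : ℝ) : ℂ) * I)^2 := by
    ext w
    rw [Real.fourier_real_eq_integral_exp_smul]
    simp only [smul_eq_mul]
    rw [hind, integral_indicator measurableSet_Ioi]
    have h3 := laplace_lin ((c:ℂ) + ((2 * Real.pi * w : ℝ) : ℂ) * I) (by simpa using hc)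
    rw [← h3]
    refine setIntegral_congr_fun measurableSet_Ioi fun v hv => ?_
    rw [mul_left_comm, ← Complex.exp_add]
    congr 2
    push_cast
    ring
  have hFi : Integrable (FourierTransform.fourier f) := by
    rw [hF]
    exact (int_base c hc).comp_mul_left' (R := 2 * Real.pi) (by positivity)
  have h5 := congrFun (hfc.fourierInv_fourier_eq hfi hFi) x
  rw [Real.fourierInv_eq', hF] at h5
  have h6 := Measure.integral_comp_mul_left
    (fun u : ℝ => Complex.exp (x * ((c:ℂ) + u * I)) * (1 / ((c:ℂ) + u * I)^2)) (2 * Real.pi)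
  have h7 : ∀ v : ℝ, Complex.exp (x * ((c:ℂ) + ((2 * Real.pi * v : ℝ) : ℂ) * I)) *
      (1 / ((c:ℂ) + ((2 * Real.pi * v : ℝ) : ℂ) * I)^2) = Complex.exp (x * c) *
      (Complex.exp (((2 * Real.pi * inner ℝ v x : ℝ) : ℂ) * I) •
        (1 / ((c:ℂ) + ((2 * Real.pi * v : ℝ) : ℂ) * I)^2)) := by
    intro v
    rw [smul_eq_mul, ← mul_assoc, ← Complex.exp_add]
    congr 2
    simp
    ring
  simp_rw [h7] at h6
  rw [integral_const_mul, h5] at h6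
  have h8 : Complex.exp (x * c) * f x = ((max x 0 : ℝ) : ℂ) := by
    simp only [hf]
    push_cast
    rw [mul_left_comm, ← Complex.exp_add]
    ring_nf
    simp
  have hpi : (Real.pi : ℂ) ≠ 0 := by exact_mod_cast Real.pi_ne_zero
  rw [h8, abs_of_pos (by positivity), Complex.real_smul] at h6
  rw [h6, ← mul_assoc]
  push_cast
  rw [mul_inv_cancel₀ (mul_ne_zero two_ne_zero hpi), one_mul]

/-- smoothing kernel -/
noncomputable def HH (lam : ℝ) (s : ℂ) : ℂ := (Complex.exp (lam * s) - 1) / (lam * s)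

lemma HH_cont (lam c : ℝ) (hlam : 0 < lam) (hc : 0 < c) :
    Continuous (fun u : ℝ => HH lam ((c:ℂ) + u * I)) := by
  unfold HH
  refine Continuous.div (by fun_prop) (by fun_prop) fun u => ?_
  exact mul_ne_zero (by exact_mod_cast hlam.ne') (s_ne c hc u)

lemma exp_norm (x c u : ℝ) : ‖Complex.exp (x * ((c:ℂ) + u * I))‖ = Real.exp (x * c) := by
  rw [Complex.norm_exp]; simp

lemma s_norm (c : ℝ) (hc : 0 < c) (u : ℝ) : c ≤ ‖(c:ℂ) + u * I‖ := by
  have := Complex.re_le_norm ((c:ℂ) + u * I)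
  simpa using this

lemma num_bd (lam c u : ℝ) :
    ‖Complex.exp (lam * ((c:ℂ) + u * I)) - 1‖ ≤ Real.exp (lam * c) + 1 := by
  refine (norm_sub_le _ _).trans ?_
  rw [exp_norm, norm_one]

lemma int_K (lam c : ℝ) (hlam : 0 < lam) (hc : 0 < c) (n : ℕ) :
    Integrable (fun u : ℝ => HH lam ((c:ℂ) + u * I) ^ (n+1) / ((c:ℂ) + u * I)) := by
  induction n with
  | zero =>
    have h := (int_base c hc).bdd_mul
      (f := fun u : ℝ => (Complex.exp (lam * ((c:ℂ) + u * I)) - 1) / lam)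
      (c := (Real.exp (lam * c) + 1) / lam)
      (Continuous.aestronglyMeasurable (by fun_prop))
      (Filter.Eventually.of_forall fun u => by
        rw [norm_div, Complex.norm_real, Real.norm_of_nonneg hlam.le]
        gcongr
        exact num_bd lam c u)
    refine h.congr (Filter.Eventually.of_forall fun u => ?_)
    have := s_ne c hc u
    have hl : (lam:ℂ) ≠ 0 := by exact_mod_cast hlam.ne'
    simp only [HH]
    generalize (c:ℂ) + u * I = s at *
    field_simp
    simp
    field_simp
  | succ n ih =>
    have h := ih.bdd_mul (f := fun u : ℝ => HH lam ((c:ℂ) + u * I))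
      (c := (Real.exp (lam * c) + 1) / (lam * c))
      (HH_cont lam c hlam hc).aestronglyMeasurable
      (Filter.Eventually.of_forall fun u => by
        rw [HH, norm_div, norm_mul, Complex.norm_real, Real.norm_of_nonneg hlam.le]
        have := s_norm c hc u
        have := num_bd lam c u
        gcongr)
    refine h.congr (Filter.Eventually.of_forall fun u => ?_)
    simp only
    ring

lemma int_EK (lam c : ℝ) (hlam : 0 < lam) (hc : 0 < c) (n : ℕ) (x : ℝ) :
    Integrable (fun u : ℝ => Complex.exp (x * ((c:ℂ) + u * I)) *
      (HH lam ((c:ℂ) + u * I) ^ (n+1) / ((c:ℂ) + u * I))) :=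
  (int_K lam c hlam hc n).bdd_mul (c := Real.exp (x * c))
    (Continuous.aestronglyMeasurable (by fun_prop))
    (Filter.Eventually.of_forall fun u => (exp_norm x c u).le)

lemma main_rec (lam c : ℝ) (hlam : 0 < lam) (hc : 0 < c) (n : ℕ) (x : ℝ) :
    ∫ u : ℝ, Complex.exp (x * ((c:ℂ) + u * I)) *
      (HH lam ((c:ℂ) + u * I) ^ (n+2) / ((c:ℂ) + u * I)) =
    (1 / lam) * ∫ t in (0:ℝ)..lam, ∫ u : ℝ, Complex.exp (((x + t : ℝ) : ℂ) * ((c:ℂ) + u * I)) *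
      (HH lam ((c:ℂ) + u * I) ^ (n+1) / ((c:ℂ) + u * I)) := by
  rw [intervalIntegral_integral_swap, ← integral_const_mul]
  · congr 1
    ext u
    rw [intervalIntegral.integral_mul_const]
    have hs := s_ne c hc u
    have hl : (lam:ℂ) ≠ 0 := by exact_mod_cast hlam.ne'
    have h1 : ∀ t : ℝ, Complex.exp (((x + t : ℝ) : ℂ) * ((c:ℂ) + u * I)) =
        Complex.exp (x * ((c:ℂ) + u * I)) * Complex.exp (((c:ℂ) + u * I) * t) := by
      intro t
      rw [← Complex.exp_add]
      congr 1
      push_cast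
      ring
    simp_rw [h1]
    rw [intervalIntegral.integral_const_mul, integral_exp_mul_complex hs]
    have h2 : (Complex.exp (((c:ℂ) + u * I) * lam) - Complex.exp (((c:ℂ) + u * I) * (0:ℝ))) /
        ((c:ℂ) + u * I) = lam * HH lam ((c:ℂ) + u * I) := by
      rw [HH, mul_comm _ (lam:ℂ)]
      simp
      field_simp
    rw [h2]
    field_simp
    ring
  · have hb : Integrable (fun z : ℝ × ℝ => (Real.exp (x * c) * Real.exp (lam * c)) *
        ‖HH lam ((c:ℂ) + z.2 * I) ^ (n+1) / ((c:ℂ) + z.2 * I)‖)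
        ((volume.restrict (Set.uIoc 0 lam)).prod volume) :=
      Integrable.mul_prod (f := fun _ : ℝ => (Real.exp (x * c) * Real.exp (lam * c)))
        (g := fun u : ℝ => ‖HH lam ((c:ℂ) + u * I) ^ (n+1) / ((c:ℂ) + u * I)‖)
        (by
          haveI : IsFiniteMeasure (volume.restrict (Set.uIoc 0 lam)) :=
            ⟨by simp [Set.uIoc_of_le hlam.le]⟩
          exact integrable_const _) (int_K lam c hlam hc n).norm
    refine hb.mono' ?_ ?_
    · refine Continuous.aestronglyMeasurable ?_
      refine Continuous.mul (by fun_prop) (Continuous.div ?_ (by fun_prop) fun z => s_ne c hc z.2)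
      exact ((HH_cont lam c hlam hc).comp continuous_snd).pow _
    · have hm : ∀ᵐ z ∂((volume.restrict (Set.uIoc 0 lam)).prod (volume : Measure ℝ)),
          z.1 ∈ Set.uIoc 0 lam :=
        Measure.quasiMeasurePreserving_fst.ae (ae_restrict_mem measurableSet_uIoc)
      filter_upwards [hm] with z hz
      rw [Set.uIoc_of_le hlam.le] at hz
      simp only [Function.uncurry]
      rw [norm_mul, exp_norm, ← Real.exp_add]
      gcongr
      nlinarith [hz.2]

/-- value of the smoothed integral -/
lemma main_val (lam c : ℝ) (hlam : 0 < lam) (hc : 0 < c) (n : ℕ) :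
    ∃ g : ℝ → ℝ, Continuous g ∧ (∀ x, 0 ≤ g x) ∧ (∀ x, g x ≤ 1) ∧ (∀ x, 0 ≤ x → g x = 1) ∧
      (∀ x, x ≤ -(lam * (n+1)) → g x = 0) ∧ 
      ∀ x : ℝ, ∫ u : ℝ, Complex.exp (x * ((c:ℂ) + u * I)) *
        (HH lam ((c:ℂ) + u * I) ^ (n+1) / ((c:ℂ) + u * I)) = 2 * Real.pi * (g x : ℂ) := by
  induction n with
  | zero =>
    refine ⟨fun x => (max (x + lam) 0 - max x 0) / lam, by fun_prop, ?_, ?_, ?_, ?_, ?_⟩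
    · intro x
      apply div_nonneg _ hlam.le
      have : max x 0 ≤ max (x + lam) 0 := max_le_max (by linarith) le_rfl
      linarith
    · intro x
      rw [div_le_one hlam, sub_le_iff_le_add]
      apply max_le
      · linarith [le_max_left x 0]
      · linarith [le_max_right x 0]
    · intro x hx
      simp only
      rw [max_eq_left (by linarith), max_eq_left hx]
      field_simp
      ring
    · intro x hx
      simp only [Nat.cast_zero, zero_add, mul_one] at hx
      simp only
      rw [max_eq_right (by linarith), max_eq_right (by linarith)]
      simp
    · intro x
      have hl : (lam:ℂ) ≠ 0 := by exact_mod_cast hlam.ne'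
      have hI : ∀ x : ℝ, Integrable (fun u : ℝ => Complex.exp (x * ((c:ℂ) + u * I)) *
          (1 / ((c:ℂ) + u * I)^2)) := fun x =>
        (int_base c hc).bdd_mul (c := Real.exp (x * c))
          (Continuous.aestronglyMeasurable (by fun_prop))
          (Filter.Eventually.of_forall fun u => (exp_norm x c u).le)
      have h1 : ∀ u : ℝ, Complex.exp (x * ((c:ℂ) + u * I)) *
        (HH lam ((c:ℂ) + u * I) ^ (0+1) / ((c:ℂ) + u * I)) =
        (1 / lam) * (Complex.exp (((x + lam : ℝ) : ℂ) * ((c:ℂ) + u * I)) *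
          (1 / ((c:ℂ) + u * I)^2) - Complex.exp (x * ((c:ℂ) + u * I)) *
          (1 / ((c:ℂ) + u * I)^2)) := by
        intro u
        have hs := s_ne c hc u
        rw [HH, Complex.ofReal_add, add_mul, Complex.exp_add]
        generalize (c:ℂ) + u * I = s at *
        rw [zero_add, pow_one]
        field_simp
      simp_rw [h1]
      rw [integral_const_mul, integral_sub (hI _) (hI _), base_inv c hc, base_inv c hc]
      push_cast
      field_simp
  | succ n ih =>
    obtain ⟨g, gc, g0, g1, gp, gm, gv⟩ := ih
    have hii : ∀ x, IntervalIntegrable (fun t => g (x + t)) volume 0 lam := fun x =>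
      Continuous.intervalIntegrable (by fun_prop) _ _
    refine ⟨fun x => (1 / lam) * ∫ t in (0:ℝ)..lam, g (x + t), ?_, ?_, ?_, ?_, ?_, ?_⟩
    · refine continuous_const.mul ?_
      exact intervalIntegral.continuous_parametric_intervalIntegral_of_continuous'
        (by fun_prop) _ _
    · intro x
      exact mul_nonneg (by positivity)
        (intervalIntegral.integral_nonneg hlam.le fun t _ => g0 _)
    · intro x
      have : ∫ t in (0:ℝ)..lam, g (x + t) ≤ ∫ t in (0:ℝ)..lam, (1:ℝ) :=
        intervalIntegral.integral_mono_on hlam.le (hii x) (by simp) fun t _ => g1 _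
      simp only [intervalIntegral.integral_const, sub_zero, smul_eq_mul, mul_one] at this
      simp only
      rw [one_div, inv_mul_le_iff₀ hlam]
      linarith
    · intro x hx
      have : ∫ t in (0:ℝ)..lam, g (x + t) = ∫ t in (0:ℝ)..lam, (1:ℝ) := by
        refine intervalIntegral.integral_congr fun t ht => ?_
        rw [Set.uIcc_of_le hlam.le] at ht
        exact gp _ (by linarith [ht.1])
      simp only [this, intervalIntegral.integral_const, sub_zero, smul_eq_mul, mul_one]
      field_simp
    · intro x hx
      have : ∫ t in (0:ℝ)..lam, g (x + t) = ∫ t in (0:ℝ)..lam, (0:ℝ) := by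
        refine intervalIntegral.integral_congr fun t ht => ?_
        rw [Set.uIcc_of_le hlam.le] at ht
        push_cast at hx
        exact gm _ (by linarith [ht.2])
      simp [this]
    · intro x
      rw [main_rec lam c hlam hc n x]
      simp_rw [gv]
      rw [intervalIntegral.integral_const_mul, intervalIntegral.integral_ofReal]
      push_cast
      ring




/-- Smoothed Perron formula: for `λ > 0`, `N ≥ 1`, `c > 0` and `y > 0`, with
`φ(y) = 1` for `y > 1` and `0` otherwise,
`0 ≤ (1/2πi)∫_{(c)} y^s ((e^{λs}−1)/(λs))^N ds/s − φ(y)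
   ≤ (1/2πi)∫_{(c)} y^s ((e^{λs}−1)/(λs))^N (1−e^{−λNs})/s ds`
(the line integrals being real-valued). -/
theorem smoothed_perron (lam : ℝ) (hlam : 0 < lam) (N : ℕ) (hN : 1 ≤ N)
    (c : ℝ) (hc : 0 < c) (y : ℝ) (hy : 0 < y) :
    ∀ I1 I2 : ℂ,
      I1 = (1 / (2 * Real.pi) : ℂ) * ∫ u : ℝ,
          (y : ℂ) ^ ((c : ℂ) + (u : ℂ) * I)
            * ((Complex.exp ((lam : ℂ) * ((c : ℂ) + (u : ℂ) * I)) - 1)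
                / ((lam : ℂ) * ((c : ℂ) + (u : ℂ) * I))) ^ N
            / ((c : ℂ) + (u : ℂ) * I) →
      I2 = (1 / (2 * Real.pi) : ℂ) * ∫ u : ℝ,
          (y : ℂ) ^ ((c : ℂ) + (u : ℂ) * I)
            * ((Complex.exp ((lam : ℂ) * ((c : ℂ) + (u : ℂ) * I)) - 1)
                / ((lam : ℂ) * ((c : ℂ) + (u : ℂ) * I))) ^ N
            * (1 - Complex.exp (-(lam : ℂ) * (N : ℂ) * ((c : ℂ) + (u : ℂ) * I)))
            / ((c : ℂ) + (u : ℂ) * I) →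
      I1.im = 0 ∧ I2.im = 0 ∧
        0 ≤ I1.re - (if 1 < y then (1 : ℝ) else 0) ∧
        I1.re - (if 1 < y then (1 : ℝ) else 0) ≤ I2.re := by

  intro I1 I2 h1 h2
  obtain ⟨n, rfl⟩ : ∃ n, N = n + 1 := ⟨N - 1, by omega⟩
  obtain ⟨g, gc, g0, g1, gp, gm, gv⟩ := main_val lam c hlam hc n
  have hyc : (y:ℂ) ≠ 0 := by exact_mod_cast hy.ne'
  have hyp : ∀ s : ℂ, (y:ℂ) ^ s = Complex.exp ((Real.log y : ℝ) * s) := by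
    intro s
    rw [Complex.cpow_def_of_ne_zero hyc, Complex.ofReal_log hy.le]
  have hpi : (Real.pi : ℂ) ≠ 0 := by exact_mod_cast Real.pi_ne_zero
  have e1 : I1 = (g (Real.log y) : ℂ) := by
    have : I1 = (1 / (2 * Real.pi) : ℂ) * ∫ u : ℝ,
        Complex.exp ((Real.log y : ℝ) * ((c:ℂ) + u * I)) *
        (HH lam ((c:ℂ) + u * I) ^ (n+1) / ((c:ℂ) + u * I)) := by
      rw [h1]
      congr 2
      ext u
      rw [hyp, HH, mul_div_assoc]
    rw [this, gv]
    field_simp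
  have e2 : I2 = ((g (Real.log y) - g (Real.log y - lam * (n+1)) : ℝ) : ℂ) := by
    have : I2 = (1 / (2 * Real.pi) : ℂ) * ∫ u : ℝ,
        (Complex.exp ((Real.log y : ℝ) * ((c:ℂ) + u * I)) *
        (HH lam ((c:ℂ) + u * I) ^ (n+1) / ((c:ℂ) + u * I)) -
        Complex.exp ((Real.log y - lam * (n+1) : ℝ) * ((c:ℂ) + u * I)) *
        (HH lam ((c:ℂ) + u * I) ^ (n+1) / ((c:ℂ) + u * I))) := by
      rw [h2]
      congr 2
      ext u
      have h3 : Complex.exp ((Real.log y - lam * (n+1) : ℝ) * ((c:ℂ) + u * I)) =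
          Complex.exp ((Real.log y : ℝ) * ((c:ℂ) + u * I)) *
          Complex.exp (-(lam : ℂ) * ((n + 1 : ℕ) : ℂ) * ((c : ℂ) + (u : ℂ) * I)) := by
        rw [← Complex.exp_add]
        congr 1
        push_cast
        ring
      rw [hyp, HH, h3]
      ring
    rw [this, integral_sub (int_EK lam c hlam hc n _) (int_EK lam c hlam hc n _), gv, gv]
    push_cast
    field_simp
  rw [e1, e2]
  refine ⟨Complex.ofReal_im _, Complex.ofReal_im _, ?_, ?_⟩
  · rw [Complex.ofReal_re]
    split_ifs with h
    · rw [gp _ (Real.log_pos h).le]; simp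
    · simpa using g0 _
  · rw [Complex.ofReal_re, Complex.ofReal_re]
    split_ifs with h
    · linarith [g1 (Real.log y - lam * (n+1))]
    · have : Real.log y ≤ 0 := Real.log_nonpos hy.le (not_lt.mp h)
      rw [gm (Real.log y - lam * (n+1)) (by linarith)]
end

section
/- Let δ_P ∈ {−1, +1} be a choice of sign for each monic irreducible P of degree ≤ n in F_q[T] with q ≡ 1 mod 4, and let S_N(n,{δ_P}) be the set of monic irreducibles Q of degree N with Legendre symbol (P/Q) = δ_P for all deg P ≤ n. If 1 ≤ n ≤ (log_q N)², then |S_N(n,{δ_P})| = q^N/(2^{Π_q(n)} N) + O(q^{N/2 + n}), where Π_q(n) is the number of monic irreducibles of degree ≤ n. -/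
open Polynomial
open scoped Classical

/-- The quadratic residue symbol `(P/Q)` in `F_q[T]`: `0` if `Q ∣ P`, `1` if `P` is a
nonzero square modulo `Q`, and `-1` otherwise. -/
noncomputable def quadSym {Fq : Type} [Field Fq] (P Q : Polynomial Fq) : ℤ :=
  if Q ∣ P then 0 else if ∃ g : Polynomial Fq, Q ∣ (g ^ 2 - P) then 1 else -1


/-- base `X^R` digits are unique -/
lemma digits_eq_zero {K : Type*} [Field K] (R : ℕ) :
    ∀ (m : ℕ) (W : K[X][X]), W.natDegree ≤ m → (∀ j, (W.coeff j).natDegree < R) →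
      W.eval (X ^ R) = 0 → W = 0 := by
  have key : ∀ W : K[X][X], (∀ j, (W.coeff j).natDegree < R) → W.eval (X ^ R) = 0 →
      W.coeff 0 = 0 ∧ W.divX.eval (X ^ R) = 0 := by
    intro W h h0
    have e := W.divX_mul_X_add
    have e2 : W.divX.eval (X ^ R) * X ^ R + W.coeff 0 = 0 := by
      rw [← h0]; conv_rhs => rw [← e]
      simp
    have hd : (X ^ R : K[X]) ∣ W.coeff 0 :=
      ⟨- W.divX.eval (X ^ R), by linear_combination e2⟩
    have hz : W.coeff 0 = 0 := by
      by_contra hne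
      have := natDegree_le_of_dvd hd hne
      rw [natDegree_X_pow] at this
      exact absurd (h 0) (by omega)
    refine ⟨hz, ?_⟩
    rw [hz, add_zero] at e2
    exact (mul_eq_zero.1 e2).resolve_right (pow_ne_zero _ X_ne_zero)
  intro m
  induction m with
  | zero =>
    intro W hm h h0
    rw [eq_C_of_natDegree_le_zero hm, (key W h h0).1, C_0]
  | succ m ih =>
    intro W hm h h0
    obtain ⟨h1, h2⟩ := key W h h0
    have : W.divX = 0 := by
      refine ih _ ?_ ?_ h2
      · rw [natDegree_divX_eq_natDegree_tsub_one]; omega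
      · intro j; rw [coeff_divX]; exact h _
    rw [← W.divX_mul_X_add, this, h1]; simp

lemma coeff_mul_natDegree_le {K : Type*} [Field K] {U V : K[X][X]} {a b : ℕ}
    (hU : ∀ j, (U.coeff j).natDegree ≤ a) (hV : ∀ j, (V.coeff j).natDegree ≤ b) (j : ℕ) :
    ((U * V).coeff j).natDegree ≤ a + b := by
  rw [coeff_mul]
  exact natDegree_sum_le_of_forall_le _ _ fun x _ =>
    natDegree_mul_le.trans (add_le_add (hU _) (hV _))

lemma nonvanishing {K : Type*} [Field K] (p : ℕ) [Fact p.Prime] [CharP K p]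
    (hp2 : p ≠ 2) (b M : ℕ) (F : K[X]) (hM : 0 < M)
    (hR : 2 * M + F.natDegree ≤ p ^ b) (hF : ∀ (c : K) (A : K[X]), F ≠ C c * A ^ 2)
    (U V : K[X][X]) (hU : ∀ j, (U.coeff j).natDegree ≤ M - 1)
    (hV : ∀ j, (V.coeff j).natDegree ≤ M - 1)
    (h : U.eval (X ^ p ^ b) + F ^ ((p ^ b + 1) / 2) * V.eval (X ^ p ^ b) = 0) :
    U = 0 ∧ V = 0 := by
  have hodd : Odd (p ^ b) := ((Fact.out : p.Prime).odd_of_ne_two hp2).pow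
  have hF0 : F ≠ 0 := by intro h0; exact hF 0 0 (by simp [h0])
  set Fz : K[X][X] := (F.map (iterateFrobenius K p b)).map C with hFz
  have hFe : Fz.eval (X ^ p ^ b) = F ^ p ^ b := by
    rw [hFz, eval_map, ← map_iterateFrobenius_expand (R := K) p F b, map_expand]
    rfl
  have hW : U ^ 2 - C F * (Fz * V ^ 2) = 0 := by
    refine digits_eq_zero (p ^ b) _ _ le_rfl ?_ ?_
    · intro j
      have h1 := coeff_mul_natDegree_le hU hU j
      have h2 := coeff_mul_natDegree_le hV hV
      have h3 : ∀ j, (Fz.coeff j).natDegree ≤ 0 := by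
        intro j; rw [hFz, coeff_map, natDegree_C]
      have h4 := coeff_mul_natDegree_le h3 h2 j
      rw [coeff_sub, coeff_C_mul, pow_two, pow_two]
      have h5 : (F * (Fz * (V * V)).coeff j).natDegree ≤ F.natDegree + (0 + (M - 1 + (M - 1))) :=
        natDegree_mul_le.trans (by omega)
      have := natDegree_sub_le ((U * U).coeff j) (F * (Fz * (V * V)).coeff j)
      have h6 : max ((U * U).coeff j).natDegree (F * (Fz * (V * V)).coeff j).natDegree
        ≤ F.natDegree + (0 + (M - 1 + (M - 1))) := max_le (by omega) h5
      omega
    · simp only [eval_sub, eval_pow, eval_mul, eval_C, hFe]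
      have e : F * F ^ p ^ b = (F ^ ((p ^ b + 1) / 2)) ^ 2 := by
        rw [← pow_mul, ← pow_succ']
        congr 1
        obtain ⟨k, hk⟩ := hodd
        omega
      have e2 : U.eval (X ^ p ^ b) = - (F ^ ((p ^ b + 1) / 2) * V.eval (X ^ p ^ b)) := by
        linear_combination h
      rw [e2]
      linear_combination - (V.eval (X ^ p ^ b)) ^ 2 * e
  have hV0 : V = 0 := by
    by_contra hV0
    have h1 : U ^ 2 = C F * (Fz * V ^ 2) := by linear_combination hW
    have h2 := congrArg leadingCoeff h1
    have h3 : Fz.leadingCoeff = C (iterateFrobenius K p b F.leadingCoeff) := by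
      rw [hFz, leadingCoeff_map_of_injective C_injective, leadingCoeff_map]
    simp only [leadingCoeff_mul, leadingCoeff_pow, leadingCoeff_C, h3] at h2
    set A := U.leadingCoeff
    set B := V.leadingCoeff with hB
    have hB0 : B ≠ 0 := leadingCoeff_ne_zero.2 hV0
    have hdv : B ∣ A := by
      refine (IsIntegrallyClosed.pow_dvd_pow_iff two_ne_zero).1 ?_
      exact ⟨F * C (iterateFrobenius K p b F.leadingCoeff), by rw [h2]; ring⟩
    obtain ⟨E, hE⟩ := hdv
    set c := iterateFrobenius K p b F.leadingCoeff with hc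
    have hc0 : c ≠ 0 := by
      rw [hc, Ne, map_eq_zero]; exact leadingCoeff_ne_zero.2 hF0
    have h5 : E ^ 2 = F * C c := by
      have : B ^ 2 * E ^ 2 = B ^ 2 * (F * C c) := by
        rw [hE] at h2; linear_combination h2
      exact mul_left_cancel₀ (pow_ne_zero _ hB0) this
    refine hF c⁻¹ E ?_
    rw [h5]
    have : C c⁻¹ * C c = (1 : K[X]) := by rw [← C_mul, inv_mul_cancel₀ hc0, C_1]
    linear_combination - F * this
  refine ⟨?_, hV0⟩
  rw [hV0] at hW
  simpa using hW

lemma exists_kernel {K V : Type*} [Field K] [AddCommGroup V] [Module K V] [FiniteDimensional K V]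
    (L : V →ₗ[K] K[X]) (D : ℕ) (h : ∀ v, (L v).natDegree < D) (hD : D < Module.finrank K V) :
    ∃ v, v ≠ 0 ∧ L v = 0 := by
  have hm : ∀ v, L v ∈ degreeLT K D := fun v => by
    rw [mem_degreeLT]
    exact lt_of_le_of_lt degree_le_natDegree (by exact_mod_cast h v)
  let L' := L.codRestrict (degreeLT K D) hm
  have : Module.Finite K (degreeLT K D) := Module.Finite.equiv (degreeLTEquiv K D).symm
  have hf : Module.finrank K (degreeLT K D) = D := by
    rw [(degreeLTEquiv K D).finrank_eq]; simp
  have hk : L'.ker ≠ ⊥ := LinearMap.ker_ne_bot_of_finrank_lt (by rw [hf]; exact hD)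
  obtain ⟨v, hv, hv0⟩ := Submodule.exists_mem_ne_zero_of_ne_bot hk
  refine ⟨v, hv0, ?_⟩
  have := congrArg Subtype.val (LinearMap.mem_ker.1 hv)
  simpa [L'] using this

lemma stepanov {K : Type*} [Field K] [Fintype K] (p : ℕ) [Fact p.Prime] [CharP K p]
    (hp2 : p ≠ 2) (μ b : ℕ) (hcard : Fintype.card K = p ^ (μ + b)) (F : K[X])
    (hR : 2 * p ^ μ + F.natDegree ≤ p ^ b) (hF : ∀ (c : K) (A : K[X]), F ≠ C c * A ^ 2)
    (ε : K) :
    2 * (Finset.univ.filter fun x : K => F.eval x ^ (Fintype.card K / 2) = ε).card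
      ≤ Fintype.card K + 4 * F.natDegree * p ^ b := by
  have hpp : p.Prime := Fact.out
  have hQ : Fintype.card K = p ^ μ * p ^ b := by rw [hcard, pow_add]
  obtain ⟨t, ht⟩ : Odd (p ^ μ) := (hpp.odd_of_ne_two hp2).pow
  obtain ⟨s, hs⟩ : Odd (p ^ b) := (hpp.odd_of_ne_two hp2).pow
  have hd : 1 ≤ F.natDegree := by
    by_contra hlt
    have := eq_C_of_natDegree_le_zero (p := F) (by omega)
    exact hF _ 1 (by rw [one_pow, mul_one]; exact this)
  set d := F.natDegree with hd'
  set M := p ^ μ with hMdef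
  set R := p ^ b with hRdef
  let ι := Fin (t + 1 + d) × Fin M
  let T : (ι → K) →ₗ[K] K[X] :=
    Fintype.linearCombination K (fun a : ι => (X : K[X]) ^ ((a.2 : ℕ) * M + a.1))
  have hT : ∀ c, T c = ∑ a : ι, C (c a) * X ^ ((a.2 : ℕ) * M + a.1) := by
    intro c
    simp [T, Fintype.linearCombination_apply, smul_eq_C_mul]
  let L : ((ι → K) × (ι → K)) →ₗ[K] K[X] :=
    T.comp (LinearMap.fst K _ _) +
      (LinearMap.mulLeft K (C ε * F ^ (t + 1))).comp (T.comp (LinearMap.snd K _ _))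
  have hL : ∀ v, L v = T v.1 + C ε * F ^ (t + 1) * T v.2 := fun v => by simp [L, mul_assoc]
  have hTd : ∀ c, (T c).natDegree ≤ (M - 1) * M + (t + d) := by
    intro c
    rw [hT]
    refine natDegree_sum_le_of_forall_le _ _ fun a _ => ?_
    refine (natDegree_C_mul_X_pow_le _ _).trans ?_
    have h1 : (a.2 : ℕ) ≤ M - 1 := by have := a.2.2; omega
    have h2 : (a.1 : ℕ) ≤ t + d := by have := a.1.2; omega
    exact add_le_add (Nat.mul_le_mul_right _ h1) h2
  obtain ⟨v, hv0, hv⟩ := exists_kernel L ((M - 1) * M + (t + d) + d * (t + 1) + 1) (by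
      intro v
      rw [hL]
      have h1 := hTd v.1
      have h2 := hTd v.2
      have h3 : (C ε * F ^ (t + 1) * T v.2).natDegree ≤ d * (t + 1) + ((M - 1) * M + (t + d)) := by
        refine natDegree_mul_le.trans (add_le_add ?_ h2)
        refine (natDegree_C_mul_le _ _).trans ?_
        rw [natDegree_pow, mul_comm]
      have h4 := natDegree_add_le (T v.1) (C ε * F ^ (t + 1) * T v.2)
      have h5 : max (T v.1).natDegree (C ε * F ^ (t + 1) * T v.2).natDegree ≤
        d * (t + 1) + ((M - 1) * M + (t + d)) := max_le (by omega) h3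
      omega) (by
      simp only [Module.finrank_prod, Module.finrank_fintype_fun_eq_card, ι, Fintype.card_prod,
        Fintype.card_fin]
      rw [ht, Nat.add_sub_cancel]
      nlinarith [Nat.zero_le (d * t)])
  let γ := fun a : ι => (iterateFrobeniusEquiv K p μ).symm (v.1 a)
  let η := fun a : ι => (iterateFrobeniusEquiv K p μ).symm (v.2 a)
  have hγ : ∀ a, γ a ^ M = v.1 a := fun a => by
    have := (iterateFrobeniusEquiv K p μ).apply_symm_apply (v.1 a)
    rwa [iterateFrobeniusEquiv_def] at this
  have hη : ∀ a, η a ^ M = v.2 a := fun a => by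
    have := (iterateFrobeniusEquiv K p μ).apply_symm_apply (v.2 a)
    rwa [iterateFrobeniusEquiv_def] at this
  let Up : (ι → K) → K[X][X] := fun c => ∑ a : ι, monomial (a.1 : ℕ) (monomial (a.2 : ℕ) (c a))
  have hUe : ∀ c, (Up c).eval (X ^ R) = ∑ a : ι, C (c a) * X ^ ((a.2 : ℕ) + a.1 * R) := by
    intro c
    simp only [Up, eval_finsetSum, eval_monomial]
    refine Finset.sum_congr rfl fun a _ => ?_
    rw [← C_mul_X_pow_eq_monomial, ← pow_mul, mul_assoc, ← pow_add, mul_comm R]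
  have hUd : ∀ c j, ((Up c).coeff j).natDegree ≤ M - 1 := by
    intro c j
    simp only [Up, finsetSum_coeff, coeff_monomial]
    refine natDegree_sum_le_of_forall_le _ _ fun a _ => ?_
    have := a.2.2
    split_ifs
    · exact (natDegree_monomial_le _).trans (by omega)
    · simp
  have hU0 : ∀ c, Up c = 0 → c = 0 := by
    intro c hc
    funext a
    have h1 := congrArg (fun W : K[X][X] => (W.coeff (a.1 : ℕ)).coeff (a.2 : ℕ)) hc
    simp only [Up, finsetSum_coeff, coeff_monomial, coeff_zero] at h1
    rw [Finset.sum_eq_single a] at h1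
    · simpa using h1
    · intro a' _ hne
      by_cases h2 : (a'.1 : ℕ) = a.1
      · by_cases h3 : (a'.2 : ℕ) = a.2
        · exact absurd (Prod.ext (Fin.ext h2) (Fin.ext h3)) hne
        · simp [h2, coeff_monomial, h3]
      · simp [h2]
    · simp
  set H := F ^ ((R + 1) / 2) with hH
  set ψ := (Up γ).eval (X ^ R) + H * (Up η).eval (X ^ R) with hψ
  have hψ0 : ψ ≠ 0 := by
    intro h0
    obtain ⟨h1, h2⟩ := nonvanishing p hp2 b M F (by omega) hR hF (Up γ) (Up η) (hUd _) (hUd _) h0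
    have h3 := hU0 _ h1
    have h4 := hU0 _ h2
    apply hv0
    have hM0 : M ≠ 0 := by omega
    refine Prod.ext (funext fun a => ?_) (funext fun a => ?_)
    · rw [← hγ, h3]; simp [hM0]
    · rw [← hη, h4]; simp [hM0]
  have hUed : ∀ c, ((Up c).eval (X ^ R)).natDegree ≤ M - 1 + (t + d) * R := by
    intro c
    rw [hUe]
    refine natDegree_sum_le_of_forall_le _ _ fun a _ => ?_
    refine (natDegree_C_mul_X_pow_le _ _).trans ?_
    have h1 : (a.2 : ℕ) ≤ M - 1 := by have := a.2.2; omega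
    have h2 : (a.1 : ℕ) ≤ t + d := by have := a.1.2; omega
    exact add_le_add h1 (Nat.mul_le_mul_right _ h2)
  have hψd : ψ.natDegree ≤ d * (s + 1) + (M - 1 + (t + d) * R) := by
    have h1 := hUed γ
    have hs' : (R + 1) / 2 = s + 1 := by omega
    have h3 : (H * (Up η).eval (X ^ R)).natDegree ≤ d * (s + 1) + (M - 1 + (t + d) * R) := by
      refine natDegree_mul_le.trans (add_le_add ?_ (hUed η))
      rw [hH, natDegree_pow, mul_comm, hs']
    exact (natDegree_add_le _ _).trans (max_le (by omega) h3)
  have hroot : ∀ x : K, F.eval x ^ (Fintype.card K / 2) = ε → ψ.eval x = 0 := by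
    intro x hx
    have hxQ : x ^ (M * R) = x := by rw [← hQ]; exact FiniteField.pow_card x
    have hsum : ∀ c c' : ι → K, (∀ a, c a ^ M = c' a) →
        ((Up c).eval (X ^ R)).eval x ^ M = (T c').eval x := by
      intro c c' hc
      rw [hUe, hT, eval_finsetSum, eval_finsetSum, sum_pow_char_pow p μ Finset.univ]
      refine Finset.sum_congr rfl fun a _ => ?_
      simp only [eval_mul, eval_C, eval_pow, eval_X]
      rw [mul_pow, hc, ← pow_mul, add_mul, pow_add, pow_add]
      congr 2
      rw [mul_assoc, mul_comm R M, mul_comm (a.1 : ℕ), pow_mul, hxQ]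
    have hHx : H.eval x ^ M = ε * (F.eval x) ^ (t + 1) := by
      rw [hH, eval_pow, ← pow_mul, ← hx, ← pow_add]
      congr 1
      have e1 : (R + 1) / 2 = s + 1 := by omega
      have e2 : Fintype.card K / 2 = (2 * t + 1) * s + t := by
        rw [hQ, ht, hs]
        have : (2 * t + 1) * (2 * s + 1) = 2 * ((2 * t + 1) * s + t) + 1 := by ring
        omega
      rw [e1, e2, ht]; ring
    have : (ψ.eval x) ^ M = 0 := by
      rw [hψ, eval_add, eval_mul, hMdef, add_pow_char_pow, ← hMdef, mul_pow, hsum γ _ hγ,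
        hsum η _ hη, hHx]
      have := congrArg (eval x) hv
      rw [hL] at this
      simpa using this
    exact pow_eq_zero_iff (by omega : M ≠ 0) |>.1 this
  have hc : (Finset.univ.filter fun x : K => F.eval x ^ (Fintype.card K / 2) = ε).card
      ≤ ψ.natDegree := by
    refine card_le_degree_of_subset_roots ?_
    intro x hx
    rw [Multiset.mem_toFinset.symm] at *
    simp at hx ⊢
    exact ⟨hψ0, hroot x hx⟩
  have h1 := hc.trans hψd
  have hMR : 2 * M ≤ R := by omega
  have h2 : M * R = 2 * (t * R) + R := by rw [ht]; ring
  have h3 : (t + d) * R = t * R + d * R := by ring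
  have h4 : 2 * (d * (s + 1)) = d * R + d := by rw [hs]; ring
  have h5 : d ≤ d * R := Nat.le_mul_of_pos_right _ (by omega)
  have h6 : 4 * d * R = 4 * (d * R) := by ring
  omega

lemma charsum {K : Type*} [Field K] [Fintype K] (p : ℕ) [Fact p.Prime] [CharP K p]
    (hp2 : p ≠ 2) (F : K[X]) (hF : ∀ (c : K) (A : K[X]), F ≠ C c * A ^ 2) :
    |∑ x : K, (quadraticChar K (F.eval x) : ℝ)| ≤
      5 * F.natDegree * p * Real.sqrt (Fintype.card K) := by
  have hpp : p.Prime := Fact.out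
  have hp3 : 3 ≤ p := by have := hpp.two_le; omega
  obtain ⟨a, hp', ha⟩ := FiniteField.card K p
  obtain ⟨μ, b, hab, hb⟩ : ∃ μ b : ℕ, (a : ℕ) = μ + b ∧ (b = μ + 1 ∨ b = μ + 2) := by
    have := a.pos
    refine ⟨((a : ℕ) - 1) / 2, (a : ℕ) - ((a : ℕ) - 1) / 2, ?_, ?_⟩ <;> omega
  rw [hab] at ha
  have hb1 : p ^ b ≤ p ^ 2 * p ^ μ := by
    rw [← pow_add]; exact Nat.pow_le_pow_right (by omega) (by omega)
  have hb2 : p * p ^ μ ≤ p ^ b := by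
    rw [← pow_succ']; exact Nat.pow_le_pow_right (by omega) (by omega)
  have hd : 1 ≤ F.natDegree := by
    by_contra hlt
    have := eq_C_of_natDegree_le_zero (p := F) (by omega)
    exact hF _ 1 (by rw [one_pow, mul_one]; exact this)
  have hd1 : (1 : ℝ) ≤ F.natDegree := by exact_mod_cast hd
  have hQ : (Fintype.card K : ℝ) = (p : ℝ) ^ μ * (p : ℝ) ^ b := by rw [ha]; push_cast; ring
  have hRle : (p : ℝ) ^ b ≤ p * Real.sqrt (Fintype.card K) := by
    have e : (p : ℝ) * Real.sqrt (Fintype.card K) = Real.sqrt (p ^ 2 * Fintype.card K) := by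
      rw [Real.sqrt_mul (by positivity), Real.sqrt_sq (by positivity)]
    rw [e]
    apply Real.le_sqrt_of_sq_le
    rw [hQ]
    have : (p : ℝ) ^ b ≤ p ^ 2 * p ^ μ := by exact_mod_cast hb1
    nlinarith [show (0 : ℝ) < (p : ℝ) ^ b by positivity]
  have hMge : Real.sqrt (Fintype.card K) ≤ p * (p : ℝ) ^ μ := by
    apply Real.sqrt_le_iff.2 ⟨by positivity, ?_⟩
    rw [hQ]
    have : (p : ℝ) ^ b ≤ p ^ 2 * p ^ μ := by exact_mod_cast hb1
    nlinarith [show (0 : ℝ) < (p : ℝ) ^ μ by positivity]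
  have hchar2 : ringChar K ≠ 2 := by rwa [ringChar.eq K p]
  by_cases hdM : F.natDegree ≤ p ^ μ
  · have hR : 2 * p ^ μ + F.natDegree ≤ p ^ b := by nlinarith
    have h1 := stepanov p hp2 μ b ha F hR hF 1
    have h2 := stepanov p hp2 μ b ha F hR hF (-1)
    have hc : ∀ x : K, ((quadraticChar K x : ℤ) : K) = x ^ (Fintype.card K / 2) :=
      quadraticChar_eq_pow_of_char_ne_two' hchar2
    have hF0 : F ≠ 0 := by rintro rfl; simp at hd
    have hz : (Finset.univ.filter fun x : K => F.eval x = 0).card ≤ F.natDegree := by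
      refine card_le_degree_of_subset_roots ?_
      intro x hx
      rw [Multiset.mem_toFinset.symm] at *
      simp at hx ⊢
      exact ⟨hF0, hx⟩
    set A := Finset.univ.filter fun x : K => F.eval x ^ (Fintype.card K / 2) = 1
    set B := Finset.univ.filter fun x : K => F.eval x ^ (Fintype.card K / 2) = -1
    set Z := Finset.univ.filter fun x : K => F.eval x = 0
    have hne : (1 : K) ≠ -1 := (Ring.neg_one_ne_one_of_char_ne_two hchar2).symm
    have hhalf : Fintype.card K / 2 ≠ 0 := by
      have : 1 < Fintype.card K := Fintype.one_lt_card
      omega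
    have hpt : ∀ x : K, (quadraticChar K (F.eval x) : ℝ) =
        (if x ∈ A then 1 else 0) - (if x ∈ B then 1 else 0) := by
      intro x
      simp only [A, B, Finset.mem_filter, Finset.mem_univ, true_and, ← hc]
      by_cases h0 : F.eval x = 0
      · simp [h0]
      · rcases quadraticChar_dichotomy h0 with h | h <;> simp [h, hne, hne.symm]
    have hone : ∀ x : K, (1 : ℝ) =
        (if x ∈ A then 1 else 0) + (if x ∈ B then 1 else 0) + (if x ∈ Z then 1 else 0) := by
      intro x
      simp only [A, B, Z, Finset.mem_filter, Finset.mem_univ, true_and, ← hc]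
      by_cases h0 : F.eval x = 0
      · simp [h0]
      · rcases quadraticChar_dichotomy h0 with h | h <;> simp [h, h0, hne, hne.symm]
    have hS : ∑ x : K, (quadraticChar K (F.eval x) : ℝ) = A.card - B.card := by
      rw [Finset.sum_congr rfl fun x _ => hpt x, Finset.sum_sub_distrib]
      simp
    have hT : (Fintype.card K : ℝ) = A.card + B.card + Z.card := by
      have : (Fintype.card K : ℝ) = ∑ x : K, (1 : ℝ) := by simp
      rw [this, Finset.sum_congr rfl fun x _ => hone x, Finset.sum_add_distrib,
        Finset.sum_add_distrib]
      simp
    have h1' : 2 * (A.card : ℝ) ≤ Fintype.card K + 4 * F.natDegree * (p : ℝ) ^ b := by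
      exact_mod_cast h1
    have h2' : 2 * (B.card : ℝ) ≤ Fintype.card K + 4 * F.natDegree * (p : ℝ) ^ b := by
      exact_mod_cast h2
    have hz' : (Z.card : ℝ) ≤ F.natDegree := by exact_mod_cast hz
    have hz0 : (0 : ℝ) ≤ Z.card := by positivity
    have hR1 : (1 : ℝ) ≤ (p : ℝ) ^ b := one_le_pow₀ (by exact_mod_cast hpp.one_le)
    have hfin : 5 * (F.natDegree : ℝ) * (p : ℝ) ^ b ≤
        5 * F.natDegree * p * Real.sqrt (Fintype.card K) := by
      rw [mul_assoc _ (p : ℝ)]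
      exact mul_le_mul_of_nonneg_left hRle (by positivity)
    have hfd : (F.natDegree : ℝ) ≤ F.natDegree * (p : ℝ) ^ b :=
      le_mul_of_one_le_right (by positivity) hR1
    rw [hS, abs_le]
    constructor <;> linarith
  · have htriv : |∑ x : K, (quadraticChar K (F.eval x) : ℝ)| ≤ Fintype.card K := by
      refine (Finset.abs_sum_le_sum_abs _ _).trans ?_
      have : (Fintype.card K : ℝ) = ∑ x : K, (1 : ℝ) := by simp
      rw [this]
      refine Finset.sum_le_sum fun x _ => ?_
      by_cases h0 : F.eval x = 0
      · simp [h0]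
      · rcases quadraticChar_dichotomy h0 with h | h <;> simp [h]
    refine htriv.trans ?_
    have hd2 : (p : ℝ) ^ μ ≤ F.natDegree := by
      have : p ^ μ ≤ F.natDegree := by omega
      exact_mod_cast this
    have hs : Real.sqrt (Fintype.card K) ≤ 5 * F.natDegree * p := by
      have : p * (p : ℝ) ^ μ ≤ p * F.natDegree := mul_le_mul_of_nonneg_left hd2 (by positivity)
      nlinarith [show (0 : ℝ) ≤ p * F.natDegree by positivity]
    calc (Fintype.card K : ℝ) = Real.sqrt (Fintype.card K) * Real.sqrt (Fintype.card K) :=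
          (Real.mul_self_sqrt (by positivity)).symm
      _ ≤ _ := mul_le_mul_of_nonneg_right hs (Real.sqrt_nonneg _)

lemma fiber_card {k K : Type*} [Field k] [Fintype k] [Field K] [Fintype K] [Algebra k K]
    (Q : k[X]) (hm : Q.Monic) (hi : Irreducible Q) (hN : Q.natDegree = Module.finrank k K) :
    (Finset.univ.filter fun x : K => minpoly k x = Q).card = Q.natDegree := by
  have hdv : Q ∣ X ^ (Nat.card k) ^ (Module.finrank k K) - X :=
    (hi.natDegree_dvd_iff_dvd_X_pow_card_pow_sub_X).1 (by rw [hN])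
  rw [← Module.natCard_eq_pow_finrank] at hdv
  have hsp : Splits (Q.map (algebraMap k K)) := by
    have h1 : Splits (X ^ Nat.card K - X : K[X]) := Polynomial.splits_X_pow_nat_card_sub_X (K := K)
    refine h1.of_dvd ?_ ?_
    · exact FiniteField.X_pow_card_sub_X_ne_zero K Finite.one_lt_card
    · have := map_dvd (algebraMap k K) hdv
      simpa using this
  have hsep : Q.Separable := PerfectField.separable_of_irreducible hi
  rw [← card_rootSet_eq_natDegree hsep hsp, ← Set.toFinset_card]
  congr 1
  ext x
  simp only [Finset.mem_filter, Finset.mem_univ, true_and, Set.mem_toFinset,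
    mem_rootSet_of_ne hi.ne_zero]
  constructor
  · rintro rfl; exact minpoly.aeval k x
  · intro h; exact (minpoly.eq_of_irreducible_of_monic hi h hm).symm

lemma nongeneric_card {k K : Type*} [Field k] [Fintype k] [Field K] [Fintype K] [Algebra k K] :
    (Finset.univ.filter fun x : K => (minpoly k x).natDegree ≠ Module.finrank k K).card
      ≤ Module.finrank k K * Fintype.card k ^ (Module.finrank k K / 2) := by
  set N := Module.finrank k K with hN
  have hq : 1 < Fintype.card k := Fintype.one_lt_card
  have hsub : (Finset.univ.filter fun x : K => (minpoly k x).natDegree ≠ N) ⊆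
      (Finset.Icc 1 (N / 2)).biUnion fun d =>
        Finset.univ.filter fun x : K => x ^ (Fintype.card k) ^ d = x := by
    intro x hx
    simp only [Finset.mem_filter, Finset.mem_univ, true_and] at hx
    have hint : IsIntegral k x := IsIntegral.of_finite k x
    have hi := minpoly.irreducible hint
    have hd : (minpoly k x).natDegree ∣ N := by
      rw [← IntermediateField.adjoin.finrank hint, hN]
      exact ⟨_, (Module.finrank_mul_finrank k (IntermediateField.adjoin k {x}) K).symm⟩
    have hpos := hi.natDegree_pos
    have hNpos : 0 < N := Module.finrank_pos
    obtain ⟨e, he⟩ := hd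
    have he2 : 2 ≤ e := by
      by_contra hlt
      have : e = 0 ∨ e = 1 := by omega
      rcases this with rfl | rfl
      · omega
      · exact hx (by rw [he, mul_one])
    simp only [Finset.mem_biUnion, Finset.mem_Icc, Finset.mem_filter, Finset.mem_univ, true_and]
    refine ⟨(minpoly k x).natDegree, ⟨hpos, ?_⟩, ?_⟩
    · rw [Nat.le_div_iff_mul_le (by norm_num)]
      rw [he]; exact Nat.mul_le_mul_left _ he2
    · have := (hi.natDegree_dvd_iff_dvd_X_pow_card_pow_sub_X).1 dvd_rfl
      have h0 := aeval_eq_zero_of_dvd_aeval_eq_zero this (minpoly.aeval k x)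
      simp only [map_sub, map_pow, aeval_X, Nat.card_eq_fintype_card] at h0
      exact sub_eq_zero.1 h0
  refine (Finset.card_le_card hsub).trans (Finset.card_biUnion_le.trans ?_)
  have hb : ∀ d ∈ Finset.Icc 1 (N / 2),
      (Finset.univ.filter fun x : K => x ^ (Fintype.card k) ^ d = x).card
        ≤ Fintype.card k ^ (N / 2) := by
    intro d hd
    rw [Finset.mem_Icc] at hd
    have h1 : 1 < Fintype.card k ^ d := Nat.one_lt_pow (by omega) hq
    have hne : (X ^ Fintype.card k ^ d - X : K[X]) ≠ 0 := FiniteField.X_pow_card_sub_X_ne_zero K h1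
    have : (Finset.univ.filter fun x : K => x ^ (Fintype.card k) ^ d = x).card ≤
        (X ^ Fintype.card k ^ d - X : K[X]).natDegree := by
      refine card_le_degree_of_subset_roots ?_
      intro x hx
      rw [Multiset.mem_toFinset.symm] at *
      simp at hx ⊢
      exact ⟨hne, sub_eq_zero.2 hx⟩
    rw [FiniteField.X_pow_card_sub_X_natDegree_eq K h1] at this
    exact this.trans (Nat.pow_le_pow_right (by omega) hd.2)
  refine (Finset.sum_le_card_nsmul _ _ _ hb).trans ?_
  rw [smul_eq_mul, Nat.card_Icc]
  exact Nat.mul_le_mul_right _ (by omega)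

lemma quadSym_eq {k : Type} {K : Type*} [Field k] [Field K] [Fintype K] [Algebra k K]
    (x : K) (hx : (minpoly k x).natDegree = Module.finrank k K) [FiniteDimensional k K]
    (P : k[X]) (hP : aeval x P ≠ 0) :
    quadSym P (minpoly k x) = quadraticChar K (aeval x P) := by
  have hsurj : ∀ y : K, ∃ g : k[X], aeval x g = y := by
    intro y
    have htop := (Field.primitive_element_iff_minpoly_natDegree_eq k x).2 hx
    have h2 := IntermediateField.adjoin_simple_toSubalgebra_of_isAlgebraic
      (IsAlgebraic.of_finite k x)
    rw [htop, Algebra.adjoin_singleton_eq_range_aeval] at h2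
    have : y ∈ (aeval x : k[X] →ₐ[k] K).range := by rw [← h2]; trivial
    exact this
  have hdv : ∀ g : k[X], minpoly k x ∣ g ↔ aeval x g = 0 := fun g => minpoly.dvd_iff
  unfold quadSym
  rw [if_neg (by rw [hdv]; exact hP)]
  have hiff : (∃ g : k[X], minpoly k x ∣ g ^ 2 - P) ↔ IsSquare (aeval x P) := by
    constructor
    · rintro ⟨g, hg⟩
      rw [hdv] at hg
      simp only [map_sub, map_pow] at hg
      exact ⟨aeval x g, by rw [← pow_two]; exact (sub_eq_zero.1 hg).symm⟩
    · rintro ⟨y, hy⟩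
      obtain ⟨g, rfl⟩ := hsurj y
      refine ⟨g, ?_⟩
      rw [hdv]
      simp only [map_sub, map_pow]
      rw [hy]; ring
  split_ifs with h
  · exact ((quadraticChar_one_iff_isSquare hP).2 (hiff.1 h)).symm
  · exact (quadraticChar_neg_one_iff_not_isSquare.2 (fun h' => h (hiff.2 h'))).symm

lemma not_const_mul_sq {k K : Type*} [Field k] [Fintype k] [Field K] [Algebra k K]
    (T : Finset k[X]) (hT : ∀ P ∈ T, P.Monic ∧ Irreducible P) (hne : T.Nonempty)
    (c : K) (A : K[X]) : (∏ P ∈ T, P).map (algebraMap k K) ≠ C c * A ^ 2 := by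
  intro h
  have hsep : (∏ P ∈ T, P).Separable := by
    refine separable_prod' (f := fun P => P) ?_ ?_
    · intro P hP P' hP' hne
      refine ((hT P hP).2.coprime_iff_not_dvd).2 fun hd => hne ?_
      exact eq_of_monic_of_associated (hT P hP).1 (hT P' hP').1
        ((hT P hP).2.associated_of_dvd (hT P' hP').2 hd)
    · intro P hP; exact PerfectField.separable_of_irreducible (hT P hP).2
  have hsq := (hsep.map (f := algebraMap k K)).squarefree
  have hA : IsUnit A := hsq A ⟨C c, by rw [h]; ring⟩
  have h1 : ((∏ P ∈ T, P).map (algebraMap k K)).natDegree = 0 := by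
    rw [h]
    have := natDegree_C_mul_le c (A ^ 2)
    rw [natDegree_pow, natDegree_eq_zero_of_isUnit hA] at this
    omega
  rw [natDegree_map, natDegree_prod_of_monic _ _ fun P hP => (hT P hP).1,
    Finset.sum_eq_zero_iff] at h1
  obtain ⟨P, hP⟩ := hne
  have := (hT P hP).2.natDegree_pos
  have := h1 P hP
  omega

lemma degree_le_card {k : Type*} [Field k] [Fintype k] (n : ℕ) (s : Set k[X])
    (hs : ∀ P ∈ s, P.natDegree ≤ n) : s.Finite ∧ Nat.card s ≤ Fintype.card k ^ (n + 1) := by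
  have hsub : s ⊆ (degreeLT k (n + 1) : Set k[X]) := by
    intro P hP
    rw [SetLike.mem_coe, mem_degreeLT]
    have := hs P hP
    exact lt_of_le_of_lt degree_le_natDegree (by exact_mod_cast (by omega))
  have e := (degreeLTEquiv k (n + 1)).toEquiv
  have hfin : Finite (degreeLT k (n + 1)) := Finite.of_equiv _ e.symm
  have hc : Nat.card (degreeLT k (n + 1)) = Fintype.card k ^ (n + 1) := by
    rw [Nat.card_congr e]; simp
  refine ⟨Set.Finite.subset (Set.toFinite _) hsub, ?_⟩
  rw [← hc]
  exact Nat.card_mono (Set.toFinite _) hsub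

lemma product_sum_bound {k K : Type*} [Field k] [Fintype k] [Field K] [Fintype K] [Algebra k K]
    (p : ℕ) [Fact p.Prime] [CharP K p] (hp2 : p ≠ 2) (S : Finset k[X])
    (hS : ∀ P ∈ S, P.Monic ∧ Irreducible P) (n : ℕ) (hn : ∀ P ∈ S, P.natDegree ≤ n)
    (δ : k[X] → ℤ) (hδ : ∀ P ∈ S, δ P = 1 ∨ δ P = -1) :
    |∑ x : K, ∏ P ∈ S, (1 + (δ P : ℝ) * (quadraticChar K (aeval x P) : ℝ)) - Fintype.card K| ≤
      2 ^ S.card * (5 * (S.card * n) * p * Real.sqrt (Fintype.card K)) := by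
  have hexp : ∑ x : K, ∏ P ∈ S, (1 + (δ P : ℝ) * (quadraticChar K (aeval x P) : ℝ)) =
      ∑ T ∈ S.powerset, (∏ P ∈ T, (δ P : ℝ)) *
        ∑ x : K, (quadraticChar K (((∏ P ∈ T, P).map (algebraMap k K)).eval x) : ℝ) := by
    simp_rw [Finset.prod_one_add]
    rw [Finset.sum_comm]
    refine Finset.sum_congr rfl fun T _ => ?_
    rw [Finset.mul_sum]
    refine Finset.sum_congr rfl fun x _ => ?_
    rw [Finset.prod_mul_distrib, eval_map_algebraMap, map_prod, map_prod]
    push_cast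
    rfl
  rw [hexp, ← Finset.sum_erase_add _ _ (Finset.empty_mem_powerset S)]
  have h0 : (∏ P ∈ (∅ : Finset k[X]), (δ P : ℝ)) *
        ∑ x : K, (quadraticChar K (((∏ P ∈ (∅ : Finset k[X]), P).map
          (algebraMap k K)).eval x) : ℝ) = Fintype.card K := by simp
  rw [h0, add_sub_cancel_right]
  refine (Finset.abs_sum_le_sum_abs _ _).trans ?_
  have hb : ∀ T ∈ S.powerset.erase ∅, |(∏ P ∈ T, (δ P : ℝ)) *
        ∑ x : K, (quadraticChar K (((∏ P ∈ T, P).map (algebraMap k K)).eval x) : ℝ)| ≤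
        5 * (S.card * n) * p * Real.sqrt (Fintype.card K) := by
    intro T hT
    rw [Finset.mem_erase, Finset.mem_powerset] at hT
    have hd1 : |∏ P ∈ T, (δ P : ℝ)| = 1 := by
      rw [Finset.abs_prod]
      refine Finset.prod_eq_one fun P hP => ?_
      rcases hδ P (hT.2 hP) with h | h <;> simp [h]
    rw [abs_mul, hd1, one_mul]
    refine (charsum p hp2 _ (not_const_mul_sq T (fun P hP => hS P (hT.2 hP))
      (Finset.nonempty_iff_ne_empty.2 hT.1))).trans ?_
    have hdeg : ((∏ P ∈ T, P).map (algebraMap k K)).natDegree ≤ S.card * n := by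
      rw [natDegree_map, natDegree_prod_of_monic _ _ fun P hP => (hS P (hT.2 hP)).1]
      refine (Finset.sum_le_card_nsmul _ _ n fun P hP => hn P (hT.2 hP)).trans ?_
      rw [smul_eq_mul]
      exact Nat.mul_le_mul_right _ (Finset.card_le_card hT.2)
    have hdeg' : (((∏ P ∈ T, P).map (algebraMap k K)).natDegree : ℝ) ≤ S.card * n := by
      exact_mod_cast hdeg
    gcongr
  refine (Finset.sum_le_card_nsmul _ _ _ hb).trans ?_
  rw [nsmul_eq_mul]
  have hcard : (S.powerset.erase ∅).card ≤ 2 ^ S.card := by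
    rw [← Finset.card_powerset]; exact Finset.card_le_card (Finset.erase_subset _ _)
  have hcard' : ((S.powerset.erase ∅).card : ℝ) ≤ 2 ^ S.card := by exact_mod_cast hcard
  exact mul_le_mul_of_nonneg_right hcard' (by positivity)

/-- Counting irreducibles with prescribed quadratic residue symbols:
`|S_N(n,{δ_P})| = q^N/(2^{Π_q(n)} N) + O(q^{N/2+n})` for `1 ≤ n ≤ (log_q N)²`. -/
theorem card_prescribed_symbols (Fq : Type) [Field Fq] [Fintype Fq]
    (q : ℕ) (hq : Fintype.card Fq = q) (hq4 : q % 4 = 1) :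
    ∃ C : ℝ, 0 < C ∧ ∀ (N n : ℕ) (δ : Polynomial Fq → ℤ),
      0 < N → 1 ≤ n → (n : ℝ) ≤ (Real.logb q N) ^ 2 →
      (∀ P : Polynomial Fq, P.Monic → Irreducible P → P.natDegree ≤ n →
        δ P = 1 ∨ δ P = -1) →
      |(Nat.card {Q : Polynomial Fq // Q.Monic ∧ Irreducible Q ∧ Q.natDegree = N ∧
            ∀ P : Polynomial Fq, P.Monic → Irreducible P → P.natDegree ≤ n →
              quadSym P Q = δ P} : ℝ)
          - (q : ℝ) ^ N
              / (2 ^ (Nat.card {P : Polynomial Fq //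
                    P.Monic ∧ Irreducible P ∧ P.natDegree ≤ n}) * N)|
        ≤ C * (q : ℝ) ^ ((N : ℝ) / 2 + n) := by
  subst hq
  have hqpos : 0 < Fintype.card Fq := Fintype.card_pos
  have hq1 : (1 : ℝ) ≤ Fintype.card Fq := by exact_mod_cast hqpos
  refine ⟨6 * (Fintype.card Fq : ℝ) ^ 2, by positivity, ?_⟩
  intro N n δ hN hn _ hδ
  set q := Fintype.card Fq with hqdef
  set PS : Set Fq[X] := {P | P.Monic ∧ Irreducible P ∧ P.natDegree ≤ n} with hPS
  set SS : Set Fq[X] := {Q | Q.Monic ∧ Irreducible Q ∧ Q.natDegree = N ∧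
            ∀ P : Polynomial Fq, P.Monic → Irreducible P → P.natDegree ≤ n →
              quadSym P Q = δ P} with hSS
  change |(Nat.card SS : ℝ) - (q : ℝ) ^ N / (2 ^ (Nat.card PS) * N)| ≤ _
  have hN' : (1 : ℝ) ≤ N := by exact_mod_cast hN
  have hrpow : (q : ℝ) ^ ((N : ℝ) / 2 + n) = Real.sqrt ((q : ℝ) ^ N) * (q : ℝ) ^ n := by
    rw [Real.rpow_add (by positivity), Real.rpow_natCast, Real.sqrt_eq_rpow, ← Real.rpow_natCast (q : ℝ) N,
      ← Real.rpow_mul (by positivity)]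
    congr 2
    ring
  have hq2 : (1 : ℝ) ≤ (q : ℝ) ^ 2 := one_le_pow₀ hq1
  by_cases hNn : N ≤ n
  · have hempty : SS = ∅ := by
      rw [Set.eq_empty_iff_forall_notMem]
      rintro Q ⟨h1, h2, h3, h4⟩
      have h5 := h4 Q h1 h2 (by omega)
      have h6 := hδ Q h1 h2 (by omega)
      have h7 : quadSym Q Q = 0 := by simp [quadSym]
      omega
    rw [hempty]
    simp only [Nat.card_of_isEmpty, Nat.cast_zero, zero_sub, abs_neg]
    rw [abs_of_nonneg (by positivity)]
    have h1 : (q : ℝ) ^ N / (2 ^ (Nat.card PS) * N) ≤ (q : ℝ) ^ N := by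
      apply div_le_self (by positivity)
      exact one_le_mul_of_one_le_of_one_le (one_le_pow₀ (by norm_num)) hN'
    have h2 : (q : ℝ) ^ N ≤ Real.sqrt ((q : ℝ) ^ N) * (q : ℝ) ^ n := by
      have hs1 : (1 : ℝ) ≤ Real.sqrt ((q : ℝ) ^ N) := Real.one_le_sqrt.2 (one_le_pow₀ hq1)
      have h3 : (q : ℝ) ^ N ≤ (q : ℝ) ^ n := pow_le_pow_right₀ hq1 hNn
      nlinarith [show (0 : ℝ) ≤ (q : ℝ) ^ n by positivity]
    rw [hrpow]
    have h3 : (0 : ℝ) ≤ Real.sqrt ((q : ℝ) ^ N) * (q : ℝ) ^ n := by positivity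
    nlinarith
  push Not at hNn
  -- the extension of degree `N`
  obtain ⟨p, hpc⟩ := CharP.exists Fq
  have hpp : p.Prime := CharP.char_is_prime Fq p
  have : Fact p.Prime := ⟨hpp⟩
  have : NeZero N := ⟨by omega⟩
  obtain ⟨a, _, ha⟩ := FiniteField.card Fq p
  have hp2 : p ≠ 2 := by
    rintro rfl
    have : 2 ∣ Fintype.card Fq := by rw [ha]; exact dvd_pow_self 2 a.ne_zero
    omega
  have hpq : p ≤ q := by rw [hqdef, ha]; exact Nat.le_self_pow a.ne_zero p
  let K := FiniteField.Extension Fq p N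
  have : Fintype K := Fintype.ofFinite K
  have hfr : Module.finrank Fq K = N := FiniteField.finrank_extension Fq p N
  have hcK : Fintype.card K = q ^ N := by
    rw [← Nat.card_eq_fintype_card, FiniteField.natCard_extension Fq p N,
      Nat.card_eq_fintype_card]
  have : CharP K p := charP_of_injective_algebraMap (algebraMap Fq K).injective p
  obtain ⟨hPfin, hPcard⟩ := degree_le_card n PS (fun P hP => hP.2.2)
  obtain ⟨hSfin, -⟩ := degree_le_card N SS (fun P hP => hP.2.2.1.le)
  set Pf := hPfin.toFinset with hPf
  set Sf := hSfin.toFinset with hSf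
  have hPn : Nat.card PS = Pf.card := Nat.card_eq_card_finite_toFinset hPfin
  have hSn : Nat.card SS = Sf.card := Nat.card_eq_card_finite_toFinset hSfin
  have hmem : ∀ P, P ∈ Pf ↔ P.Monic ∧ Irreducible P ∧ P.natDegree ≤ n := fun P => by
    rw [hPf, Set.Finite.mem_toFinset, hPS]; rfl
  have hZ := product_sum_bound (K := K) p hp2 Pf (fun P hP => ⟨((hmem P).1 hP).1, ((hmem P).1 hP).2.1⟩)
    n (fun P hP => ((hmem P).1 hP).2.2) δ
    (fun P hP => hδ P ((hmem P).1 hP).1 ((hmem P).1 hP).2.1 ((hmem P).1 hP).2.2)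
  set f : K → ℝ := fun x =>
    ∏ P ∈ Pf, (1 + (δ P : ℝ) * (quadraticChar K (aeval x P) : ℝ)) with hf
  set G := Finset.univ.filter fun x : K => minpoly Fq x ∈ Sf with hG
  set E := Finset.univ.filter fun x : K => (minpoly Fq x).natDegree ≠ N with hE
  have hEcard : E.card ≤ N * q ^ (N / 2) := by
    have := nongeneric_card (k := Fq) (K := K)
    rwa [hfr] at this
  have hmemS : ∀ Q, Q ∈ Sf ↔ Q.Monic ∧ Irreducible Q ∧ Q.natDegree = N ∧
            ∀ P : Polynomial Fq, P.Monic → Irreducible P → P.natDegree ≤ n →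
              quadSym P Q = δ P := fun Q => by
    rw [hSf, Set.Finite.mem_toFinset, hSS]; rfl
  have hGcard : G.card = Sf.card * N := by
    rw [Finset.card_eq_sum_card_fiberwise (f := fun x : K => minpoly Fq x) (t := Sf)
      (fun x hx => by simpa [hG] using hx)]
    rw [Finset.sum_const_nat]
    intro Q hQ
    have hQ' := (hmemS Q).1 hQ
    have h1 := fiber_card (K := K) Q hQ'.1 hQ'.2.1 (by rw [hfr]; exact hQ'.2.2.1)
    rw [hQ'.2.2.1] at h1
    refine Eq.trans ?_ h1
    rw [hG, Finset.filter_filter]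
    congr 1
    ext x
    simp only [Finset.mem_filter, Finset.mem_univ, true_and]
    exact ⟨fun h => h.2, fun h => ⟨h ▸ hQ, h⟩⟩
  have hchar : ∀ y : K, |((quadraticChar K y : ℤ) : ℝ)| ≤ 1 := by
    intro y
    by_cases h0 : y = 0
    · simp [h0]
    · rcases quadraticChar_dichotomy h0 with h | h <;> simp [h]
  have hfac : ∀ P ∈ Pf, ∀ x : K, 0 ≤ 1 + (δ P : ℝ) * (quadraticChar K (aeval x P) : ℝ) ∧
      1 + (δ P : ℝ) * (quadraticChar K (aeval x P) : ℝ) ≤ 2 := by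
    intro P hP x
    have h1 := abs_le.1 (hchar (aeval x P))
    have h2 := (hmem P).1 hP
    rcases hδ P h2.1 h2.2.1 h2.2.2 with h | h <;> rw [h] <;> push_cast <;>
      constructor <;> linarith
  have hf0 : ∀ x, 0 ≤ f x := fun x => Finset.prod_nonneg fun P hP => (hfac P hP x).1
  have hf2 : ∀ x, f x ≤ 2 ^ Pf.card := fun x => by
    rw [← Finset.prod_const]
    exact Finset.prod_le_prod (fun P hP => (hfac P hP x).1) (fun P hP => (hfac P hP x).2)
  have hpt : ∀ x, (if x ∈ G then (2 : ℝ) ^ Pf.card else 0) ≤ f x ∧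
      f x ≤ (if x ∈ G then (2 : ℝ) ^ Pf.card else 0) + (if x ∈ E then (2 : ℝ) ^ Pf.card else 0) := by
    intro x
    by_cases hx : (minpoly Fq x).natDegree = N
    · have hxE : x ∉ E := by simp [hE, hx]
      have hint : IsIntegral Fq x := IsIntegral.of_finite Fq x
      have hne : ∀ P ∈ Pf, aeval x P ≠ 0 := by
        intro P hP h0
        have h1 := (hmem P).1 hP
        have h2 := natDegree_le_of_dvd (minpoly.dvd Fq x h0) h1.2.1.ne_zero
        omega
      have hsym : ∀ P ∈ Pf, quadSym P (minpoly Fq x) = quadraticChar K (aeval x P) :=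
        fun P hP => quadSym_eq x (by rw [hx, hfr]) P (hne P hP)
      have hval : f x = if x ∈ G then (2 : ℝ) ^ Pf.card else 0 := by
        split_ifs with hxG
        · rw [hG, Finset.mem_filter, hmemS] at hxG
          rw [hf]
          simp only
          rw [Finset.prod_congr rfl (g := fun _ => (2 : ℝ)), Finset.prod_const]
          intro P hP
          have h1 := (hmem P).1 hP
          rw [← hsym P hP, hxG.2.2.2.2 P h1.1 h1.2.1 h1.2.2]
          rcases hδ P h1.1 h1.2.1 h1.2.2 with h | h <;> rw [h] <;> norm_num
        · have : ∃ P ∈ Pf, quadraticChar K (aeval x P) ≠ δ P := by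
            by_contra hcon
            push Not at hcon
            apply hxG
            rw [hG, Finset.mem_filter, hmemS]
            refine ⟨Finset.mem_univ _, minpoly.monic hint, minpoly.irreducible hint, hx, ?_⟩
            intro P h1 h2 h3
            have hP : P ∈ Pf := (hmem P).2 ⟨h1, h2, h3⟩
            rw [hsym P hP, hcon P hP]
          obtain ⟨P, hP, hPne⟩ := this
          refine Finset.prod_eq_zero hP ?_
          have h1 := (hmem P).1 hP
          rcases hδ P h1.1 h1.2.1 h1.2.2 with h | h <;>
            rcases quadraticChar_dichotomy (hne P hP) with h' | h' <;>
            first | exact absurd (h'.trans h.symm) hPne | (rw [h, h']; norm_num)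
      rw [hval, if_neg hxE]
      simp
    · have hxE : x ∈ E := by simp [hE, hx]
      have hxG : x ∉ G := by
        rw [hG, Finset.mem_filter, hmemS]
        exact fun h => hx h.2.2.2.1
      rw [if_pos hxE, if_neg hxG]
      exact ⟨hf0 x, by rw [zero_add]; exact hf2 x⟩
  have hlow : (2 : ℝ) ^ Pf.card * G.card ≤ ∑ x : K, f x := by
    have := Finset.sum_le_sum (s := Finset.univ) fun x _ => (hpt x).1
    refine le_trans (le_of_eq ?_) this
    rw [Finset.sum_ite_mem]
    simp [mul_comm]
  have hupp : ∑ x : K, f x ≤ (2 : ℝ) ^ Pf.card * G.card + 2 ^ Pf.card * E.card := by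
    have := Finset.sum_le_sum (s := Finset.univ) fun x _ => (hpt x).2
    refine this.trans (le_of_eq ?_)
    rw [Finset.sum_add_distrib, Finset.sum_ite_mem, Finset.sum_ite_mem]
    simp [mul_comm]
  rw [hcK] at hZ
  push_cast at hZ
  rw [hPn, hSn, hrpow]
  set W : ℝ := 2 ^ Pf.card with hW
  have hWpos : 0 < W := by positivity
  set r := Real.sqrt ((q : ℝ) ^ N) with hr
  have hr0 : 0 ≤ r := Real.sqrt_nonneg _
  have hE2 : (E.card : ℝ) ≤ N * r := by
    have h1 : (E.card : ℝ) ≤ N * (q : ℝ) ^ (N / 2) := by exact_mod_cast hEcard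
    refine h1.trans (mul_le_mul_of_nonneg_left ?_ (by positivity))
    apply Real.le_sqrt_of_sq_le
    rw [← pow_mul]
    exact pow_le_pow_right₀ hq1 (by omega)
  have hP2 : (Pf.card : ℝ) ≤ (q : ℝ) ^ (n + 1) := by
    rw [← hPn]; exact_mod_cast hPcard
  have hB : 5 * (Pf.card * n) * p * r ≤ 5 * (q : ℝ) ^ 2 * (r * (q : ℝ) ^ n) * N := by
    have h1 : (p : ℝ) ≤ q := by exact_mod_cast hpq
    have h2 : (n : ℝ) ≤ N := by exact_mod_cast hNn.le
    calc 5 * ((Pf.card : ℝ) * n) * p * r ≤ 5 * ((q : ℝ) ^ (n + 1) * N) * q * r := by gcongr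
      _ = _ := by ring
  have hE3 : (E.card : ℝ) ≤ (q : ℝ) ^ 2 * (r * (q : ℝ) ^ n) * N := by
    refine hE2.trans ?_
    have h1 : (1 : ℝ) ≤ (q : ℝ) ^ 2 * (q : ℝ) ^ n :=
      one_le_mul_of_one_le_of_one_le hq2 (one_le_pow₀ hq1)
    have h2 : (0 : ℝ) ≤ N * r := by positivity
    nlinarith
  have hGr : (G.card : ℝ) = Sf.card * N := by exact_mod_cast hGcard
  have hZ' := abs_le.1 hZ
  have hmain : |(Sf.card : ℝ) * (W * N) - (q : ℝ) ^ N| ≤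
      6 * (q : ℝ) ^ 2 * (r * (q : ℝ) ^ n) * (W * N) := by
    have h1 : W * (5 * (Pf.card * n) * p * r) ≤ W * (5 * (q : ℝ) ^ 2 * (r * (q : ℝ) ^ n) * N) :=
      mul_le_mul_of_nonneg_left hB hWpos.le
    have h2 : W * E.card ≤ W * ((q : ℝ) ^ 2 * (r * (q : ℝ) ^ n) * N) :=
      mul_le_mul_of_nonneg_left hE3 hWpos.le
    have h3 : (0 : ℝ) ≤ W * ((q : ℝ) ^ 2 * (r * (q : ℝ) ^ n) * N) := by positivity
    have h4 : (Sf.card : ℝ) * (W * N) = W * G.card := by rw [hGr]; ring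
    rw [h4, abs_le]
    constructor <;> linarith [hZ'.1, hZ'.2]
  have hWN : 0 < W * (N : ℝ) := by positivity
  have e : (Sf.card : ℝ) - (q : ℝ) ^ N / (W * N) =
      ((Sf.card : ℝ) * (W * N) - (q : ℝ) ^ N) / (W * N) := by
    field_simp
  rw [e, abs_div, abs_of_pos hWN, div_le_iff₀ hWN]
  exact hmain
end
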